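/- arXiv:math/0610334 — 2 statements merged into one kernel-verified Lean document; each statement's English description precedes it below -/
import Mathlib

section
/- For every integer d ≥ 2 and every ε > 0 there exists a translation-equivariant matching rule Φ such that E[Z_Φ^{2/3 − ε}] < ∞. -/
open MeasureTheory ENNReal

noncomputable section

/-- Sites: the lattice `ℤ^d`. -/
abbrev Site (d : ℕ) := Fin d → ℤ

/-- Configurations: elements of `{0,1}^{ℤ^d}`, encoded with `Bool`. -/
abbrev Config (d : ℕ) := Site d → Bool

/-- The translation `θ^z` acting on configurations: `(θ^z γ)(x) = γ(x - z)`. -/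
def shiftCfg {d : ℕ} (z : Site d) (γ : Config d) : Config d := fun x => γ (x - z)

/-- `φ` is a matching on `γ`: an involutive bijection matching ones to zeros. -/
def IsMatching {d : ℕ} (γ : Config d) (φ : Site d → Site d) : Prop :=
  Function.Bijective φ ∧ (∀ x, φ (φ x) = x) ∧ ∀ x, γ (φ x) = !(γ x)

/-- `Φ` is a matching rule with respect to the measure `P`. -/
def IsMatchingRule {d : ℕ} (P : Measure (Config d)) (Φ : Config d → Site d → Site d) : Prop :=
  (∀ x : Site d, Measurable fun γ => Φ γ x) ∧ ∀ᵐ γ ∂P, IsMatching γ (Φ γ)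

/-- `Φ` is translation-equivariant with respect to `P`. -/
def IsEquivariant {d : ℕ} (P : Measure (Config d)) (Φ : Config d → Site d → Site d) : Prop :=
  ∀ z x : Site d, ∀ᵐ γ ∂P, Φ (shiftCfg z γ) (x + z) = Φ γ x + z

/-- `P` is the product measure with i.i.d. Bernoulli(1/2) coordinates, characterized by
its values on cylinder events. -/
def IsBernoulliHalfProduct {d : ℕ} (P : Measure (Config d)) : Prop :=
  IsProbabilityMeasure P ∧
    ∀ (s : Finset (Site d)) (f : Site d → Bool),
      P {γ | ∀ x ∈ s, γ x = f x} = (1 / 2 : ℝ≥0∞) ^ s.card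

/-- `Z_Φ(γ) = ‖Φ(γ, 0)‖`, the `ℓ^∞` distance from the origin to its partner. -/
def ZΦ {d : ℕ} (Φ : Config d → Site d → Site d) (γ : Config d) : ℝ := ‖Φ γ 0‖

/-- Embedding of the lattice in `ℝ^d`. -/
def toR {d : ℕ} (x : Site d) : Fin d → ℝ := fun i => (x i : ℝ)

/-- The first standard basis vector `e₁`. -/
def e1 (d : ℕ) : Site d := fun i => if (i : ℕ) = 0 then 1 else 0

/-- `x` is a `k`-seed for `γ`. -/
def IsSeed {d : ℕ} (γ : Config d) (k : ℕ) (x : Site d) : Prop :=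
  γ x = true ∧ ∀ n : ℕ, 1 ≤ n → n ≤ k - 1 → γ (x + (n : ℤ) • e1 d) = false

/-- `r_k = (2^k k²)^{1/d} + 1/2`. -/
def rr (d k : ℕ) : ℝ := ((2 : ℝ) ^ k * (k : ℝ) ^ 2) ^ ((d : ℝ)⁻¹) + 1 / 2

/-- The shift `s_k = ⌊100 r_k⌋ e₁`. -/
def ss (d k : ℕ) : Site d := ⌊(100 : ℝ) * rr d k⌋ • e1 d

/-- `W_k(γ)`: the union of all `k`-cutters. -/
def cutters {d : ℕ} (γ : Config d) (k : ℕ) : Set (Fin d → ℝ) :=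
  ⋃ x ∈ {x : Site d | IsSeed γ k (x - ss d k)}, {y : Fin d → ℝ | ‖y - toR x‖ = rr d k}

/-- The `k`-blob containing the point `p ∈ ℝ^d`: the connected component of `p` in the
complement of all `j`-cutters with `j > k`. -/
def blob {d : ℕ} (γ : Config d) (k : ℕ) (p : Fin d → ℝ) : Set (Fin d → ℝ) :=
  connectedComponentIn (⋃ j ∈ {j : ℕ | k < j}, cutters γ j)ᶜ p

/-- The `k`-clump of a site `x`: the lattice points of the `k`-blob containing `x`. -/
def clump {d : ℕ} (γ : Config d) (k : ℕ) (x : Site d) : Set (Site d) :=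
  {y : Site d | toR y ∈ blob γ k (toR x)}

/-- The event `E_k`: the cube `S(-s_k, r_k - 1)` contains a `k`-seed. -/
def Ek (d k : ℕ) : Set (Config d) :=
  {γ | ∃ y : Site d, IsSeed γ k y ∧ ‖toR y + toR (ss d k)‖ ≤ rr d k - 1}

/-- A `k`-seed lying in the annulus `S(-s_k, r_k + s) \ S(-s_k, r_k - s)`. -/
def SeedInAnnulus {d : ℕ} (γ : Config d) (k : ℕ) (s : ℝ) (y : Site d) : Prop :=
  IsSeed γ k y ∧ ‖toR y + toR (ss d k)‖ ≤ rr d k + s ∧ rr d k - s < ‖toR y + toR (ss d k)‖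

/-- The event `U_k(s)`: `S(-s_k, r_k + s) \ S(-s_k, r_k - s)` contains a `k`-seed. -/
def Uk (d : ℕ) (k : ℕ) (s : ℝ) : Set (Config d) :=
  {γ | ∃ y : Site d, SeedInAnnulus γ k s y}

/-- The event `C_k(s) = ∪_{j ≥ k} U_j(s)`. -/
def Ck (d : ℕ) (k : ℕ) (s : ℝ) : Set (Config d) :=
  {γ | ∃ j : ℕ, k ≤ j ∧ γ ∈ Uk d j s}

/-- `±1`-valued spin `2γ(x) - 1`. -/
def pm1 {d : ℕ} (γ : Config d) (y : Site d) : ℤ := if γ y then 1 else -1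

/-- `Φ` matches maximally within clumps: a.s. every clump is finite and the number of
sites of each `k`-clump `L` matched outside `L` equals `|Σ_{x ∈ L} (2γ(x) - 1)|`. -/
def MatchesMaximally {d : ℕ} (P : Measure (Config d))
    (Φ : Config d → Site d → Site d) : Prop :=
  ∀ᵐ γ ∂P, ∀ k : ℕ, 1 ≤ k → ∀ x : Site d,
    (clump γ k x).Finite ∧
      (({y ∈ clump γ k x | Φ γ y ∉ clump γ k x}.ncard : ℤ)
        = |∑ᶠ y ∈ clump γ k x, pm1 γ y|)

/-!
The rule is built in stages. A *center* is the start of a long run of ones, and every site belongs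
to the lexicographically least center within some radius. The grid of mesh `2 ^ j` anchored at a
center divides its territory into cells, and stage `j` matches as many of the unmatched ones and
zeros as possible inside every cell. The run length and the radius change only when `j` passes a
value `A * 2 ^ n`, with `A` a large constant; within such a level `n` the cells are nested.

After stage `j` the unmatched sites of a cell all have the same colour, so their number is at most
the modulus of the excess of ones over zeros in the cell, plus the number of sites whose partner
lies in another cell. The spins of two sites are uncorrelated unless flipping one of the coins
creates or destroys a run, so the excess is of order `2 ^ (j * d / 2)`, which is at most the
surface `2 ^ (j * (d - 1))` of the cell because `d ≥ 2`. A partner lies in another cell only if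
the pair was made at a stage `i` of a lower level and is separated by the boundary of a cell of
stage `j`, which has probability about `2 ^ (i - j)`. Writing `u j` for the probability that the
origin is unmatched after stage `j`, and `w = 2 ^ 2 ^ n` for the order of the number of competing
centers at the level of stage `j + 1`, one gets

`2 ^ (j + 1) * u (j + 1) ≤ K * w ^ 3 * (1 + ∑ 2 ^ (i + 1) * u i)`,

the sum running over the stages `i + 1` of lower level. As `w` squares from one level to the next,
`2 ^ j * u j ≤ C * w ^ 10` follows by induction, and `w = 2 ^ O(j / A)`. Hence
`u j ≤ C * 2 ^ (-β * j)` for any given `β < 1` once `A` is large, while a site matched at stage `j`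
has its partner within distance `2 ^ j`.
-/

namespace CoinMatching

variable {d : ℕ}

section Pairing

variable {α : Type*}

theorem exists_involutive_mapsTo {H T : Finset α} (hdisj : Disjoint H T)
    (hcard : H.card ≤ T.card) :
    ∃ f : α → α, f.Involutive ∧ (∀ x ∈ H, f x ∈ T) ∧ ∀ x ∈ T, f x ≠ x → f x ∈ H := by
  classical
  rcases isEmpty_or_nonempty α with _ | _
  · exact ⟨id, fun _ => rfl, fun x => isEmptyElim x, fun x => isEmptyElim x⟩
  obtain ⟨g, hgT, hg⟩ := H.finite_toSet.exists_injOn_of_encard_le (t := (T : Set α))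
    (by simpa only [Set.encard_coe_eq_coe_finsetCard, Nat.cast_le] using hcard)
  have hgT : ∀ x ∈ H, g x ∈ T := fun x hx => hgT hx
  have hginv : ∀ x ∈ H, Function.invFunOn g H (g x) = x := fun x hx => hg.leftInvOn_invFunOn hx
  have hgH : ∀ x ∈ H, g x ∉ H := fun x hx hx' => Finset.disjoint_left.1 hdisj hx' (hgT x hx)
  refine ⟨fun x => if x ∈ H then g x else if x ∈ H.image g then Function.invFunOn g H x else x,
    fun x => ?_, fun x hx => by simp [hx, hgT x hx], fun x hxT hne => ?_⟩
  · by_cases hx : x ∈ H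
    · simp [hx, hgH x hx, hginv x hx, Finset.mem_image_of_mem g hx]
    by_cases hx' : x ∈ H.image g
    · obtain ⟨y, hy, rfl⟩ := Finset.mem_image.1 hx'
      simp [hx, hx', hginv y hy, hy]
    · simp [hx, hx']
  · have hx : x ∉ H := Finset.disjoint_right.1 hdisj hxT
    by_cases hx' : x ∈ H.image g
    · obtain ⟨y, hy, rfl⟩ := Finset.mem_image.1 hx'
      simp [hx, hx', hginv y hy, hy]
    · simp [hx, hx'] at hne

theorem exists_maximal_pairing (U H : Finset α) :
    ∃ f : α → α, f.Involutive ∧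
      (∀ x ∈ U, f x ≠ x → f x ∈ U ∧ (f x ∈ H ↔ x ∉ H)) ∧
      ∀ x ∈ U, ∀ y ∈ U, f x = x → f y = y → (x ∈ H ↔ y ∈ H) := by
  classical
  have hdisj : Disjoint (U ∩ H) (U \ H) :=
    Finset.disjoint_sdiff.mono_left Finset.inter_subset_right
  rcases le_total (U ∩ H).card (U \ H).card with hle | hle
  · obtain ⟨f, hf, hH, hT⟩ := exists_involutive_mapsTo hdisj hle
    simp only [Finset.mem_inter, Finset.mem_sdiff] at hH hT
    refine ⟨f, hf, ?_, ?_⟩ <;> grind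
  · obtain ⟨f, hf, hH, hT⟩ := exists_involutive_mapsTo hdisj.symm hle
    simp only [Finset.mem_inter, Finset.mem_sdiff] at hH hT
    refine ⟨f, hf, ?_, ?_⟩ <;> grind

/-- A choice of a maximal matching between the points of `U` in `H` and those not in `H`; the
unmatched points are fixed. -/
def pairing (U H : Finset α) : α → α := (exists_maximal_pairing U H).choose

variable {U H : Finset α} {x y : α}

theorem pairing_pairing (U H : Finset α) (x : α) : pairing U H (pairing U H x) = x :=
  (exists_maximal_pairing U H).choose_spec.1 x

theorem pairing_mem (hx : x ∈ U) (hne : pairing U H x ≠ x) : pairing U H x ∈ U :=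
  ((exists_maximal_pairing U H).choose_spec.2.1 x hx hne).1

theorem pairing_mem_right_iff (hx : x ∈ U) (hne : pairing U H x ≠ x) :
    pairing U H x ∈ H ↔ x ∉ H :=
  ((exists_maximal_pairing U H).choose_spec.2.1 x hx hne).2

theorem mem_right_iff_of_pairing_eq_self (hx : x ∈ U) (hy : y ∈ U) (hfx : pairing U H x = x)
    (hfy : pairing U H y = y) : x ∈ H ↔ y ∈ H :=
  (exists_maximal_pairing U H).choose_spec.2.2 x hx y hy hfx hfy

theorem abs_sum_eq_card_of_forall_eq {s : Finset α} {σ : α → ℤ} (hσ : ∀ x ∈ s, |σ x| = 1)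
    (heq : ∀ x ∈ s, ∀ y ∈ s, σ x = σ y) : |∑ x ∈ s, σ x| = s.card := by
  rcases s.eq_empty_or_nonempty with rfl | ⟨a, ha⟩
  · simp
  · rw [Finset.sum_congr rfl fun x hx => heq x hx a ha, Finset.sum_const, nsmul_eq_mul, abs_mul,
      hσ a ha, mul_one, Nat.abs_cast]

theorem sum_eq_zero_of_involutive_neg [DecidableEq α] (C : Finset α) {f : α → α} {σ : α → ℤ}
    (hf : f.Involutive) (hpair : ∀ x ∈ C, f x ≠ x → σ (f x) = -σ x) :
    ∑ x ∈ C with f x ≠ x ∧ f x ∈ C, σ x = 0 := by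
  refine Finset.sum_involution (fun x _ => f x) (fun x hx => ?_) (fun x hx _ => ?_)
    (fun x hx => ?_) (fun x _ => hf x) <;> simp only [Finset.mem_filter] at hx ⊢
  · rw [hpair x hx.1 hx.2.1, add_neg_cancel]
  · exact hx.2.1
  · rw [hf x]
    exact ⟨hx.2.2, hx.2.1.symm, hx.1⟩

theorem card_fixed_le_abs_sum_add_card_escaping [DecidableEq α] (C : Finset α) {f : α → α}
    {σ : α → ℤ} (hf : f.Involutive) (hσ : ∀ x ∈ C, |σ x| = 1)
    (hpair : ∀ x ∈ C, f x ≠ x → σ (f x) = -σ x)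
    (hfix : ∀ x ∈ C, ∀ y ∈ C, f x = x → f y = y → σ x = σ y) :
    ((C.filter fun x => f x = x).card : ℤ) ≤ |∑ x ∈ C, σ x| + (C.filter fun x => f x ∉ C).card := by
  have hsplit : ∑ x ∈ C, σ x =
      (∑ x ∈ C with f x = x, σ x) + ∑ x ∈ C with f x ∉ C, σ x := by
    rw [← Finset.sum_filter_add_sum_filter_not C (fun x => f x = x)]
    congr 1
    rw [← Finset.sum_filter_add_sum_filter_not (C.filter fun x => ¬f x = x) (fun x => f x ∈ C),
      Finset.filter_filter, Finset.filter_filter, sum_eq_zero_of_involutive_neg C hf hpair,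
      zero_add]
    exact congrArg (Finset.sum · σ) (Finset.filter_congr (by grind))
  have hfixed : |∑ x ∈ C with f x = x, σ x| = ((C.filter fun x => f x = x).card : ℤ) := by
    apply abs_sum_eq_card_of_forall_eq <;> simp only [Finset.mem_filter] <;> grind
  have hescape : |∑ x ∈ C with f x ∉ C, σ x| ≤ ((C.filter fun x => f x ∉ C).card : ℤ) :=
    (Finset.abs_sum_le_sum_abs _ _).trans <|
      (Finset.sum_le_card_nsmul _ _ 1 fun x hx => (hσ x (Finset.mem_filter.1 hx).1).le).trans
        (by simp)
  have htriangle := abs_sub (∑ x ∈ C, σ x) (∑ x ∈ C with f x ∉ C, σ x)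
  rw [hsplit, add_sub_cancel_right, hfixed, ← hsplit] at htriangle
  linarith

end Pairing

section Geometry

/-- The `ℓ^∞` ball of radius `r` around the origin of `ℤ^d`. -/
def box (d r : ℕ) : Finset (Site d) := Finset.Icc (fun _ => -(r : ℤ)) (fun _ => (r : ℤ))

theorem mem_box {r : ℕ} {x : Site d} : x ∈ box d r ↔ ∀ k, |x k| ≤ (r : ℤ) := by
  simp only [box, Finset.mem_Icc, Pi.le_def, abs_le, forall_and]

theorem card_box (d r : ℕ) : (box d r).card = (2 * r + 1) ^ d := by
  simp only [box, Pi.card_Icc, Int.card_Icc, Finset.prod_const, Finset.card_univ, Fintype.card_fin]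
  congr 1
  omega

theorem zero_mem_box (d r : ℕ) : (0 : Site d) ∈ box d r :=
  mem_box.2 fun _ => by simp

theorem neg_mem_box {r : ℕ} {x : Site d} : -x ∈ box d r ↔ x ∈ box d r := by
  simp only [mem_box, Pi.neg_apply, abs_neg]

theorem add_mem_box {r r' : ℕ} {x y : Site d} (hx : x ∈ box d r) (hy : y ∈ box d r') :
    x + y ∈ box d (r + r') :=
  mem_box.2 fun k => (abs_add_le _ _).trans <| by
    push_cast
    exact add_le_add (mem_box.1 hx k) (mem_box.1 hy k)

theorem box_mono {r r' : ℕ} (h : r ≤ r') : box d r ⊆ box d r' := fun _ hx =>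
  mem_box.2 fun k => (mem_box.1 hx k).trans (by exact_mod_cast h)

/-- The segment of `m` sites starting at `s` and pointing in the direction `e₁`. -/
def window (m : ℕ) (s : Site d) : Finset (Site d) :=
  (Finset.range m).image fun t : ℕ => s + (t : ℤ) • e1 d

theorem add_mem_window_add {m : ℕ} {s x z : Site d} :
    x + z ∈ window m (s + z) ↔ x ∈ window m s := by
  simp [window, add_right_comm _ z]

theorem sub_mem_box_of_mem_window {m : ℕ} {s x : Site d} (hx : x ∈ window m s) :
    x - s ∈ box d m := by
  obtain ⟨t, ht, rfl⟩ := Finset.mem_image.1 hx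
  rw [Finset.mem_range] at ht
  refine mem_box.2 fun k => ?_
  simp only [add_sub_cancel_left, Pi.smul_apply, e1, smul_eq_mul]
  split_ifs <;> rw [abs_le] <;> omega

/-- The grid of mesh `q` through the origin divides `ℤ^d` into half-open cubes; this is the index of
the cube containing `y`. -/
def gridIndex (q : ℕ) (y : Site d) : Site d := fun k => y k / (q : ℤ)

/-- The part of `box d R` in the grid cube with index `v`. -/
def gridBlock (R q : ℕ) (v : Site d) : Finset (Site d) :=
  (box d R).filter fun y => gridIndex q y = v

theorem mem_gridBlock {R q : ℕ} {v y : Site d} :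
    y ∈ gridBlock R q v ↔ y ∈ box d R ∧ gridIndex q y = v :=
  Finset.mem_filter

theorem abs_sub_lt_of_ediv_eq {a b q : ℤ} (hq : 0 < q) (h : a / q = b / q) : |a - b| < q := by
  have ha := Int.emod_add_mul_ediv a q
  have hb := Int.emod_add_mul_ediv b q
  rw [h] at ha
  rw [abs_lt]
  constructor <;>
    linarith [Int.emod_nonneg a hq.ne', Int.emod_nonneg b hq.ne', Int.emod_lt_of_pos a hq,
      Int.emod_lt_of_pos b hq]

theorem gridIndex_eq_of_dvd {q q' : ℕ} (hdvd : q ∣ q') {x y : Site d}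
    (h : gridIndex q x = gridIndex q y) : gridIndex q' x = gridIndex q' y := by
  obtain ⟨c, rfl⟩ := hdvd
  ext k
  have hk := congrFun h k
  simp only [gridIndex, Nat.cast_mul] at hk ⊢
  rw [← Int.ediv_ediv_of_nonneg (Int.natCast_nonneg q),
    ← Int.ediv_ediv_of_nonneg (Int.natCast_nonneg q), hk]

end Geometry

section Centers

/-- A run of length `m` at `s`: the sites of `window m s` all carry a one. -/
def IsRun (γ : Config d) (m : ℕ) (s : Site d) : Prop := ∀ x ∈ window m s, γ x = true

/-- The center `s` of a site `x` is the lexicographically least start of a run of length `m` within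
distance `R` of `x`. -/
def IsCenter (γ : Config d) (m R : ℕ) (x s : Site d) : Prop :=
  s - x ∈ box d R ∧ IsRun γ m s ∧ ∀ s', s' - x ∈ box d R → IsRun γ m s' → toLex s ≤ toLex s'

variable {γ : Config d} {m R q : ℕ} {x y s s' : Site d}

theorem IsCenter.unique (h : IsCenter γ m R x s) (h' : IsCenter γ m R x s') : s = s' :=
  toLex.injective (le_antisymm (h.2.2 s' h'.1 h'.2.1) (h'.2.2 s h.1 h.2.1))

theorem exists_isCenter (hbox : s - x ∈ box d R) (hrun : IsRun γ m s) :
    ∃ s', IsCenter γ m R x s' := by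
  classical
  obtain ⟨y, hy, hmin⟩ := Finset.exists_min_image
    ((box d R).filter fun y => IsRun γ m (x + y)) (fun y => toLex (x + y))
    ⟨s - x, by simp [hbox, hrun]⟩
  simp only [Finset.mem_filter] at hy hmin
  refine ⟨x + y, by simpa using hy.1, hy.2, fun s' hbox' hrun' => ?_⟩
  simpa using hmin (s' - x) ⟨hbox', by simpa using hrun'⟩

theorem IsCenter.of_mem_box_iff (h : IsCenter γ m R x s)
    (hiff : ∀ s', IsRun γ m s' → (s' - y ∈ box d R ↔ s' - x ∈ box d R)) : IsCenter γ m R y s :=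
  ⟨(hiff s h.2.1).2 h.1, h.2.1, fun s' hbox hrun => h.2.2 s' ((hiff s' hrun).1 hbox) hrun⟩

/-- Two sites lie in the same cell if they have the same center `s` and the grid of mesh `q` through
`s` does not separate them. -/
def SameCell (γ : Config d) (m R q : ℕ) (x y : Site d) : Prop :=
  ∃ s, IsCenter γ m R x s ∧ IsCenter γ m R y s ∧ gridIndex q (x - s) = gridIndex q (y - s)

theorem SameCell.of_dvd {q' : ℕ} (hdvd : q ∣ q') (h : SameCell γ m R q x y) :
    SameCell γ m R q' x y :=
  let ⟨s, hx, hy, hgrid⟩ := h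
  ⟨s, hx, hy, gridIndex_eq_of_dvd hdvd hgrid⟩

theorem SameCell.sub_mem_box (hq : 0 < q) (h : SameCell γ m R q x y) : y - x ∈ box d q := by
  obtain ⟨s, -, -, hgrid⟩ := h
  refine mem_box.2 fun k => ?_
  have := abs_sub_lt_of_ediv_eq (by exact_mod_cast hq) (congrFun hgrid k)
  rw [abs_sub_comm, Pi.sub_apply, Pi.sub_apply, sub_sub_sub_cancel_right] at this
  exact this.le

/-- The site `y` has a partner under `φ`, but in another cell. -/
def IsCut (γ : Config d) (φ : Site d → Site d) (m R q : ℕ) (y : Site d) : Prop :=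
  φ y ≠ y ∧ ¬SameCell γ m R q y (φ y)

end Centers

section Step

open Classical in
/-- The grid cell with index `v` of the territory of `s`, in coordinates relative to `s`. -/
def relCell (γ : Config d) (m R q : ℕ) (s v : Site d) : Finset (Site d) :=
  (gridBlock R q v).filter fun y => IsCenter γ m R (s + y) s

/-- The sites of a relative cell that are fixed by `φ`, that is, not yet matched. -/
def freeSites (γ : Config d) (φ : Site d → Site d) (m R q : ℕ) (s v : Site d) : Finset (Site d) :=
  (relCell γ m R q s v).filter fun y => φ (s + y) = s + y

/-- The sites of a relative cell that carry a one. -/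
def oneSites (γ : Config d) (m R q : ℕ) (s v : Site d) : Finset (Site d) :=
  (relCell γ m R q s v).filter fun y => γ (s + y) = true

open Classical in
/-- One round of the construction: inside every cell, the sites left unmatched by `φ` are matched
maximally. The pairing is chosen in coordinates relative to the center of the cell, which makes the
rule translation-equivariant. -/
def step (γ : Config d) (φ : Site d → Site d) (m R q : ℕ) (x : Site d) : Site d :=
  if h : φ x = x ∧ ∃ s, IsCenter γ m R x s then
    let s := h.2.choose
    s + pairing (freeSites γ φ m R q s (gridIndex q (x - s)))
      (oneSites γ m R q s (gridIndex q (x - s))) (x - s)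
  else φ x

variable {γ : Config d} {φ : Site d → Site d} {m R q : ℕ} {x y s v : Site d}

theorem mem_relCell : y ∈ relCell γ m R q s v ↔ IsCenter γ m R (s + y) s ∧ gridIndex q y = v := by
  simp only [relCell, Finset.mem_filter, mem_gridBlock]
  rw [and_right_comm, and_assoc, and_iff_right_iff_imp]
  rintro ⟨h, -⟩
  simpa [neg_mem_box] using h.1

theorem mem_freeSites :
    y ∈ freeSites γ φ m R q s v ↔ y ∈ relCell γ m R q s v ∧ φ (s + y) = s + y :=
  Finset.mem_filter

theorem mem_oneSites :
    y ∈ oneSites γ m R q s v ↔ y ∈ relCell γ m R q s v ∧ γ (s + y) = true :=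
  Finset.mem_filter

theorem step_of_ne (h : φ x ≠ x) : step γ φ m R q x = φ x :=
  dif_neg fun h' => h h'.1

theorem step_of_not_exists_isCenter (h : ¬∃ s, IsCenter γ m R x s) : step γ φ m R q x = φ x :=
  dif_neg fun h' => h h'.2

theorem step_of_isCenter (hx : φ x = x) (hs : IsCenter γ m R x s) :
    step γ φ m R q x = s + pairing (freeSites γ φ m R q s (gridIndex q (x - s)))
      (oneSites γ m R q s (gridIndex q (x - s))) (x - s) := by
  have h : φ x = x ∧ ∃ s, IsCenter γ m R x s := ⟨hx, s, hs⟩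
  rw [step, dif_pos h, h.2.choose_spec.unique hs]

theorem sub_mem_relCell (hs : IsCenter γ m R x s) :
    x - s ∈ relCell γ m R q s (gridIndex q (x - s)) := by
  simp [mem_relCell, hs]

theorem sub_mem_freeSites (hx : φ x = x) (hs : IsCenter γ m R x s) :
    x - s ∈ freeSites γ φ m R q s (gridIndex q (x - s)) := by
  simp [mem_freeSites, sub_mem_relCell hs, hx]

theorem apply_eq_self_of_step_eq_self (h : step γ φ m R q x = x) : φ x = x := by
  by_contra hne
  exact hne (step_of_ne hne ▸ h)

theorem step_spec (hx : φ x = x) (hne : step γ φ m R q x ≠ x) :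
    SameCell γ m R q x (step γ φ m R q x) ∧ γ (step γ φ m R q x) = !(γ x) ∧
      step γ φ m R q (step γ φ m R q x) = x := by
  obtain ⟨s, hs⟩ : ∃ s, IsCenter γ m R x s := by
    by_contra hcenter
    exact hne (step_of_not_exists_isCenter hcenter ▸ hx)
  have hstep := step_of_isCenter (q := q) hx hs
  set x' := step γ φ m R q x
  set v := gridIndex q (x - s) with hv
  have hpair : pairing (freeSites γ φ m R q s v) (oneSites γ m R q s v) (x - s) = x' - s := by
    rw [hstep, add_sub_cancel_left]
  have hmem := sub_mem_freeSites (q := q) hx hs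
  have hmoved : pairing (freeSites γ φ m R q s v) (oneSites γ m R q s v) (x - s) ≠ x - s := by
    rwa [hpair, ne_eq, sub_left_inj]
  have hfree := pairing_mem hmem hmoved
  have hcolor := pairing_mem_right_iff hmem hmoved
  rw [hpair, mem_freeSites, mem_relCell, add_sub_cancel] at hfree
  obtain ⟨⟨hs', hv'⟩, hx'⟩ := hfree
  rw [hpair] at hcolor
  refine ⟨⟨s, hs, hs', hv'.symm⟩, ?_, ?_⟩
  · simp only [mem_oneSites, mem_relCell, add_sub_cancel, hs, hs', hv', ← hv, true_and] at hcolor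
    revert hcolor
    cases γ x <;> cases γ x' <;> simp
  · rw [step_of_isCenter hx' hs', hv', ← hpair, pairing_pairing, add_sub_cancel]

/-- An involution that moves sites only to sites of the opposite colour; its fixed points are the
unmatched sites. -/
structure IsPartialMatching (γ : Config d) (φ : Site d → Site d) : Prop where
  involutive : φ.Involutive
  apply_of_ne : ∀ x, φ x ≠ x → γ (φ x) = !(γ x)

theorem IsPartialMatching.step (h : IsPartialMatching γ φ) (m R q : ℕ) :
    IsPartialMatching γ (step γ φ m R q) := by
  constructor
  · intro x
    by_cases hx : φ x = x
    · by_cases hx' : CoinMatching.step γ φ m R q x = x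
      · rw [hx', hx']
      · exact (step_spec hx hx').2.2
    · rw [step_of_ne hx, step_of_ne (by rwa [h.involutive, ne_comm]), h.involutive]
  · intro x hx'
    by_cases hx : φ x = x
    · exact (step_spec hx hx').2.1
    · rw [step_of_ne hx]
      exact h.apply_of_ne x hx

theorem apply_eq_of_step_eq_self (hx : IsCenter γ m R x s) (hy : IsCenter γ m R y s)
    (hgrid : gridIndex q (x - s) = gridIndex q (y - s)) (hfx : step γ φ m R q x = x)
    (hfy : step γ φ m R q y = y) : γ x = γ y := by
  have hφx := apply_eq_self_of_step_eq_self hfx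
  have hφy := apply_eq_self_of_step_eq_self hfy
  rw [step_of_isCenter hφx hx, ← eq_sub_iff_add_eq'] at hfx
  rw [step_of_isCenter hφy hy, ← eq_sub_iff_add_eq', ← hgrid] at hfy
  have hiff := mem_right_iff_of_pairing_eq_self (sub_mem_freeSites hφx hx)
    (hgrid ▸ sub_mem_freeSites hφy hy) hfx hfy
  simp only [mem_oneSites, mem_relCell, add_sub_cancel, hx, hy, hgrid, true_and] at hiff
  exact Bool.eq_iff_iff.2 hiff

end Step

section Counting

variable {γ : Config d} {φ : Site d → Site d} {m R q : ℕ}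

open Classical in
/-- The spin `±1` of `y` if `y` has center `0`, and `0` otherwise. -/
def centeredSpin (γ : Config d) (m R : ℕ) (y : Site d) : ℤ :=
  if IsCenter γ m R y 0 then pm1 γ y else 0

/-- The signed number of ones minus zeros among the sites of `G` with center `0`. -/
def excess (γ : Config d) (m R : ℕ) (G : Finset (Site d)) : ℤ :=
  ∑ y ∈ G, centeredSpin γ m R y

theorem abs_pm1 (γ : Config d) (y : Site d) : |pm1 γ y| = 1 := by
  unfold pm1
  split_ifs <;> rfl

theorem abs_centeredSpin_le_one (γ : Config d) (m R : ℕ) (y : Site d) :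
    |centeredSpin γ m R y| ≤ 1 := by
  unfold centeredSpin
  split_ifs
  · exact (abs_pm1 γ y).le
  · simp

theorem abs_excess_le (γ : Config d) (m R : ℕ) (G : Finset (Site d)) :
    |excess γ m R G| ≤ G.card :=
  (Finset.abs_sum_le_sum_abs _ _).trans <|
    (Finset.sum_le_card_nsmul _ _ _ fun y _ => abs_centeredSpin_le_one γ m R y).trans_eq (by simp)

open Classical in
theorem card_unmatched_gridBlock_le (hφ : IsPartialMatching γ φ) (m R q : ℕ) (v : Site d) :
    (((gridBlock R q v).filter fun y => IsCenter γ m R y 0 ∧ step γ φ m R q y = y).card : ℤ) ≤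
      |excess γ m R (gridBlock R q v)| +
        ((gridBlock R q v).filter fun y => IsCenter γ m R y 0 ∧ IsCut γ φ m R q y).card := by
  set C := (gridBlock R q v).filter fun y => IsCenter γ m R y 0 with hC
  have hmem : ∀ y ∈ C, IsCenter γ m R y 0 ∧ gridIndex q y = v := fun y hy => by
    rw [hC, Finset.mem_filter, mem_gridBlock] at hy
    exact ⟨hy.2, hy.1.2⟩
  have hstep := hφ.step m R q
  have hcount := card_fixed_le_abs_sum_add_card_escaping C (σ := pm1 γ) hstep.involutive
    (fun y _ => by unfold pm1; split_ifs <;> rfl)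
    (fun y _ hy => by rw [pm1, pm1, hstep.apply_of_ne y hy]; cases γ y <;> rfl)
    (fun x hx y hy hfx hfy => by
      rw [pm1, pm1, apply_eq_of_step_eq_self (hmem x hx).1 (hmem y hy).1
        (by rw [sub_zero, sub_zero, (hmem x hx).2, (hmem y hy).2]) hfx hfy])
  have hescape : (C.filter fun y => step γ φ m R q y ∉ C) ⊆
      (gridBlock R q v).filter fun y => IsCenter γ m R y 0 ∧ IsCut γ φ m R q y := by
    intro y hy
    simp only [Finset.mem_filter] at hy ⊢
    obtain ⟨hyC, hesc⟩ := hy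
    have hcell : ¬SameCell γ m R q y (step γ φ m R q y) := by
      rintro ⟨s, hs, hs', hgrid⟩
      obtain rfl := hs.unique (hmem y hyC).1
      refine hesc (Finset.mem_filter.2 ⟨mem_gridBlock.2 ⟨?_, ?_⟩, hs'⟩)
      · simpa [neg_mem_box] using hs'.1
      · rw [← (hmem y hyC).2]
        simpa using hgrid.symm
    have hne : φ y ≠ y := fun h => hesc <| by
      by_contra
      have hmoved : step γ φ m R q y ≠ y := fun h' => hesc (h'.symm ▸ hyC)
      exact hcell (step_spec h hmoved).1
    rw [step_of_ne hne] at hcell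
    exact ⟨(Finset.mem_filter.1 hyC).1, (hmem y hyC).1, hne, hcell⟩
  rw [hC, Finset.filter_filter, Finset.sum_filter] at hcount
  refine hcount.trans (add_le_add le_rfl ?_)
  exact_mod_cast Finset.card_le_card hescape

end Counting

section Construction

/-- The level of stage `j`: the least `n` with `j ≤ A * 2 ^ n`. The runs that serve as centers are
the same for all stages of one level. -/
def level (A j : ℕ) : ℕ := Nat.clog 2 (j ⌈/⌉ A)

/-- The radius within which a site looks for its center at level `n`. -/
def radius (A n : ℕ) : ℕ := 2 ^ (A * 2 ^ n)

/-- The length of the runs used at level `n`. It makes the expected number of runs in a box of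
radius `radius A n` about `2 ^ 2 ^ n`. -/
def runLength (d A n : ℕ) : ℕ := (d * A - 1) * 2 ^ n

/-- The partial matching after stage `j`; stage `j` works in grid cells of side `2 ^ j`. -/
def partialMatching (A : ℕ) : ℕ → Config d → Site d → Site d
  | 0, _ => id
  | j + 1, γ => step γ (partialMatching A j γ) (runLength d A (level A (j + 1)))
      (radius A (level A (j + 1))) (2 ^ (j + 1))

variable {A i j n : ℕ} {γ : Config d} {x : Site d}

theorem level_le_iff (hA : 0 < A) : level A j ≤ n ↔ j ≤ A * 2 ^ n := by
  rw [level, Nat.clog_le_iff_le_pow Nat.one_lt_two, ceilDiv_le_iff_le_mul hA]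

theorem le_mul_two_pow_level (hA : 0 < A) (j : ℕ) : j ≤ A * 2 ^ level A j :=
  (level_le_iff hA).1 le_rfl

theorem level_mono (hA : 0 < A) : Monotone (level A) := fun _ j hij =>
  (level_le_iff hA).2 (hij.trans (le_mul_two_pow_level hA j))

theorem isPartialMatching_partialMatching (A j : ℕ) (γ : Config d) :
    IsPartialMatching γ (partialMatching A j γ) := by
  induction j with
  | zero => exact ⟨fun _ => rfl, fun _ h => absurd rfl h⟩
  | succ j ih => exact ih.step _ _ _

theorem partialMatching_eq_of_le (hij : i ≤ j) (h : partialMatching A i γ x ≠ x) :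
    partialMatching A j γ x = partialMatching A i γ x := by
  induction j, hij using Nat.le_induction with
  | base => rfl
  | succ j _ ih =>
    rw [← ih] at h ⊢
    exact step_of_ne h

theorem exists_stage_of_matched (h : partialMatching A j γ x ≠ x) :
    ∃ i < j, partialMatching A i γ x = x ∧ SameCell γ (runLength d A (level A (i + 1)))
      (radius A (level A (i + 1))) (2 ^ (i + 1)) x (partialMatching A j γ x) := by
  induction j with
  | zero => exact absurd rfl h
  | succ j ih =>
    by_cases hj : partialMatching A j γ x = x
    · exact ⟨j, Nat.lt_succ_self j, hj, (step_spec hj h).1⟩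
    · obtain ⟨i, hij, hi, hcell⟩ := ih hj
      rw [partialMatching_eq_of_le (Nat.le_succ j) hj]
      exact ⟨i, hij.trans (Nat.lt_succ_self j), hi, hcell⟩

end Construction

section Separation

theorem abs_sub_le_iff_of_lt_abs_sub {a b r t : ℤ} (hsub : t < |a - r|) (hadd : t < |a + r|)
    (hb : |b| ≤ t) : |a - b| ≤ r ↔ |a| ≤ r := by
  rw [lt_abs] at hsub hadd
  rw [abs_le] at hb
  rw [abs_le, abs_le]
  omega

theorem ediv_sub_eq_of_lt_abs_sub {a b q t : ℤ} (hq : 0 < q) (ha : ∀ c, t < |a - c * q|)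
    (hb : |b| ≤ t) : (b - a) / q = -a / q := by
  have hdiv := Int.emod_add_mul_ediv (-a) q
  have hnonneg := Int.emod_nonneg (-a) hq.ne'
  have hlt := Int.emod_lt_of_pos (-a) hq
  have hlow := ha (-(-a / q))
  have hhigh := ha (-(-a / q) - 1)
  rw [abs_le] at hb
  rw [lt_abs] at hlow hhigh
  rw [Int.ediv_eq_iff_of_pos hq]
  constructor
  · rcases hlow with h | h <;> linarith
  · rcases hhigh with h | h <;> linarith

/-- The sites `s` near `box d R` for which the grid of mesh `q` through `s` comes within distance
`t` of the origin. -/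
def nearGrid (d R q t : ℕ) : Finset (Site d) :=
  open Classical in
  (box d (R + t)).filter fun s => ∃ k, ∃ c : ℤ, |s k - c * q| ≤ t

theorem mem_nearGrid {R q t : ℕ} {s : Site d} :
    s ∈ nearGrid d R q t ↔ s ∈ box d (R + t) ∧ ∃ k, ∃ c : ℤ, |s k - c * q| ≤ t := by
  simp only [nearGrid, Finset.mem_filter]

variable {γ : Config d} {m c q t : ℕ} {s y : Site d}

theorem sub_mem_box_iff_of_notMem_nearGrid (hs : s ∉ nearGrid d (c * q) q t) (hy : y ∈ box d t) :
    s - y ∈ box d (c * q) ↔ s ∈ box d (c * q) := by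
  by_cases hbox : s ∈ box d (c * q + t)
  · have hgrid : ∀ k, ∀ b : ℤ, t < |s k - b * q| := by
      simpa only [mem_nearGrid, hbox, true_and, not_exists, not_le] using hs
    simp only [mem_box, Pi.sub_apply]
    refine forall_congr' fun k =>
      abs_sub_le_iff_of_lt_abs_sub (by simpa using hgrid k c) ?_ (mem_box.1 hy k)
    simpa using hgrid k (-c)
  · refine iff_of_false (fun h => hbox ?_) fun h => hbox (box_mono (Nat.le_add_right _ _) h)
    simpa using add_mem_box h hy

theorem gridIndex_sub_eq_of_notMem_nearGrid (hq : 0 < q) (hs : s ∉ nearGrid d (c * q) q t)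
    (hsbox : s ∈ box d (c * q)) (hy : y ∈ box d t) :
    gridIndex q (0 - s) = gridIndex q (y - s) := by
  have hgrid : ∀ k, ∀ b : ℤ, t < |s k - b * q| := by
    simpa only [mem_nearGrid, box_mono (Nat.le_add_right _ _) hsbox, true_and, not_exists, not_le]
      using hs
  ext k
  simp only [gridIndex, Pi.sub_apply, Pi.zero_apply, zero_sub]
  exact (ediv_sub_eq_of_lt_abs_sub (by exact_mod_cast hq) (hgrid k) (mem_box.1 hy k)).symm

theorem exists_isRun_mem_nearGrid (hq : 0 < q) (hs : IsCenter γ m (c * q) 0 s)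
    (hy : y ∈ box d t) (hsep : ¬SameCell γ m (c * q) q 0 y) :
    ∃ s ∈ nearGrid d (c * q) q t, IsRun γ m s := by
  by_contra! hnone
  have hfar : ∀ s, IsRun γ m s → s ∉ nearGrid d (c * q) q t := fun s hrun hmem => hnone s hmem hrun
  refine hsep ⟨s, hs, hs.of_mem_box_iff fun s' hrun => ?_, ?_⟩
  · rw [sub_zero]
    exact sub_mem_box_iff_of_notMem_nearGrid (hfar s' hrun) hy
  · exact gridIndex_sub_eq_of_notMem_nearGrid hq (hfar s hs.2.1) (by simpa using hs.1) hy

theorem radius_level_eq_mul {A : ℕ} (hA : 0 < A) (j : ℕ) :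
    radius A (level A j) = 2 ^ (A * 2 ^ level A j - j) * 2 ^ j := by
  rw [radius, ← pow_add, Nat.sub_add_cancel (le_mul_two_pow_level hA j)]

-- A pair made at stage `i + 1` of the current level stays together, since the cells of one level
-- are nested; so only pairs of a lower level can be cut.
theorem exists_isRun_of_pair_cut {A j : ℕ} (hA : 0 < A)
    (hs : IsCenter γ (runLength d A (level A (j + 1))) (radius A (level A (j + 1))) 0 s)
    (hcut : IsCut γ (partialMatching A j γ) (runLength d A (level A (j + 1)))
      (radius A (level A (j + 1))) (2 ^ (j + 1)) 0) :
    ∃ i < j, level A (i + 1) < level A (j + 1) ∧ partialMatching A i γ 0 = 0 ∧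
      ∃ s ∈ nearGrid d (radius A (level A (j + 1))) (2 ^ (j + 1)) (2 ^ (i + 1)),
        IsRun γ (runLength d A (level A (j + 1))) s := by
  obtain ⟨i, hij, hi, hcell⟩ := exists_stage_of_matched hcut.1
  replace hcut := hcut.2
  have hle : i + 1 ≤ j + 1 := Nat.succ_le_succ hij.le
  refine ⟨i, hij, (level_mono hA hle).lt_of_ne fun heq => hcut ?_, hi, ?_⟩
  · rw [← heq]
    exact hcell.of_dvd (pow_dvd_pow 2 hle)
  · rw [radius_level_eq_mul hA] at hs hcut ⊢
    refine exists_isRun_mem_nearGrid (Nat.two_pow_pos _) hs ?_ hcut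
    simpa using hcell.sub_mem_box (Nat.two_pow_pos _)

end Separation

section Congruence

/-- Around `x + z`, up to distance `r`, the configuration `γ'` looks like `γ` does around `x`. For
`γ' = shiftCfg z γ` this gives equivariance, for `z = 0` locality. -/
def LooksAlike (γ γ' : Config d) (z x : Site d) (r : ℕ) : Prop :=
  ∀ y, y - x ∈ box d r → γ' (y + z) = γ y

variable {γ γ' : Config d} {z x s : Site d} {m R q : ℕ}

theorem looksAlike_shiftCfg (γ : Config d) (z x : Site d) (r : ℕ) :
    LooksAlike γ (shiftCfg z γ) z x r := fun y _ => by
  rw [shiftCfg, add_sub_cancel_right]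

theorem LooksAlike.of_sub_mem_box {y : Site d} {r a b : ℕ} (h : LooksAlike γ γ' z x r)
    (hy : y - x ∈ box d a) (hab : a + b ≤ r) : LooksAlike γ γ' z y b := fun w hw =>
  h w <| box_mono hab <| by simpa using add_mem_box hy hw

theorem LooksAlike.mono {r r' : ℕ} (h : LooksAlike γ γ' z x r) (hr : r' ≤ r) :
    LooksAlike γ γ' z x r' :=
  h.of_sub_mem_box (a := 0) (by simpa using zero_mem_box d 0) (by omega)

theorem isRun_congr (h : LooksAlike γ γ' z s m) : IsRun γ' m (s + z) ↔ IsRun γ m s := by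
  unfold IsRun
  rw [(Equiv.addRight z).surjective.forall]
  refine forall_congr' fun x => ?_
  rw [Equiv.coe_addRight, add_mem_window_add]
  exact forall_congr' fun hx => by rw [h x (sub_mem_box_of_mem_window hx)]

theorem isCenter_congr (h : LooksAlike γ γ' z x (R + m)) :
    IsCenter γ' m R (x + z) (s + z) ↔ IsCenter γ m R x s := by
  have hrun : ∀ s, s - x ∈ box d R → (IsRun γ' m (s + z) ↔ IsRun γ m s) := fun s hs =>
    isRun_congr (h.of_sub_mem_box hs le_rfl)
  unfold IsCenter
  rw [(Equiv.addRight z).surjective.forall]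
  simp only [Equiv.coe_addRight, add_sub_add_right_eq_sub, toLex_add, add_le_add_iff_right]
  refine and_congr_right fun hs => and_congr (hrun s hs) ?_
  exact forall₂_congr fun s' hs' => by rw [hrun s' hs']

theorem exists_isCenter_congr (h : LooksAlike γ γ' z x (R + m)) :
    (∃ s, IsCenter γ' m R (x + z) s) ↔ ∃ s, IsCenter γ m R x s := by
  rw [(Equiv.addRight z).surjective.exists]
  exact exists_congr fun s => isCenter_congr h

theorem sameCell_congr {y : Site d} (hx : LooksAlike γ γ' z x (R + m))
    (hy : LooksAlike γ γ' z y (R + m)) :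
    SameCell γ' m R q (x + z) (y + z) ↔ SameCell γ m R q x y := by
  unfold SameCell
  rw [(Equiv.addRight z).surjective.exists]
  simp only [Equiv.coe_addRight, isCenter_congr hx, isCenter_congr hy, add_sub_add_right_eq_sub]

theorem relCell_congr {v : Site d} (h : LooksAlike γ γ' z s (2 * R + m)) :
    relCell γ' m R q (s + z) v = relCell γ m R q s v := by
  classical
  refine Finset.filter_congr fun y hy => ?_
  rw [add_right_comm]
  refine isCenter_congr (h.of_sub_mem_box (a := R) ?_ (by omega))
  rw [add_sub_cancel_left]
  exact (mem_gridBlock.1 hy).1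

theorem mem_box_of_mem_relCell {v y : Site d} (hy : y ∈ relCell γ m R q s v) : y ∈ box d R := by
  simpa [neg_mem_box] using (mem_relCell.1 hy).1.1

theorem step_congr {φ φ' : Site d → Site d} (h : LooksAlike γ γ' z x (3 * R + m))
    (hφ : ∀ y, y - x ∈ box d (2 * R) → φ' (y + z) = φ y + z) :
    step γ' φ' m R q (x + z) = step γ φ m R q x + z := by
  have hx : φ' (x + z) = φ x + z := hφ x (by simpa using zero_mem_box d _)
  have hcenter : LooksAlike γ γ' z x (R + m) := h.mono (by omega)
  by_cases hfree : φ x = x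
  swap
  · rw [step_of_ne hfree, step_of_ne (by rwa [hx, ne_eq, _root_.add_left_inj]), hx]
  by_cases hex : ∃ s, IsCenter γ m R x s
  swap
  · rw [step_of_not_exists_isCenter hex,
      step_of_not_exists_isCenter (mt (exists_isCenter_congr hcenter).1 hex), hx]
  obtain ⟨s, hs⟩ := hex
  have hcell (v) : relCell γ' m R q (s + z) v = relCell γ m R q s v :=
    relCell_congr (h.of_sub_mem_box hs.1 (by omega))
  have hnear (y v) (hy : y ∈ relCell γ m R q s v) : s + y - x ∈ box d (2 * R) := by
    rw [two_mul, add_sub_right_comm]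
    exact add_mem_box hs.1 (mem_box_of_mem_relCell hy)
  have hfreeSites (v) : freeSites γ' φ' m R q (s + z) v = freeSites γ φ m R q s v := by
    rw [freeSites, hcell]
    refine Finset.filter_congr fun y hy => ?_
    rw [add_right_comm, hφ _ (hnear y v hy), _root_.add_left_inj]
  have honeSites (v) : oneSites γ' m R q (s + z) v = oneSites γ m R q s v := by
    rw [oneSites, hcell]
    refine Finset.filter_congr fun y hy => ?_
    rw [add_right_comm, h _ (box_mono (by omega) (hnear y v hy))]
  rw [step_of_isCenter hfree hs,
    step_of_isCenter (by rw [hx, hfree]) ((isCenter_congr hcenter).2 hs), hfreeSites, honeSites,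
    add_sub_add_right_eq_sub, add_right_comm]

/-- A radius such that the configuration in the ball of this radius around a site determines its
partner after stage `j`. -/
def localRadius (d A : ℕ) : ℕ → ℕ
  | 0 => 0
  | j + 1 => localRadius d A j + (3 * radius A (level A (j + 1)) + runLength d A (level A (j + 1)))

theorem partialMatching_congr {A j : ℕ} (h : LooksAlike γ γ' z x (localRadius d A j)) :
    partialMatching A j γ' (x + z) = partialMatching A j γ x + z := by
  induction j generalizing x with
  | zero => rfl
  | succ j ih =>
    simp only [localRadius] at h
    exact step_congr (h.mono (by omega)) fun y hy => ih (h.of_sub_mem_box hy (by omega))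

theorem partialMatching_shiftCfg (A j : ℕ) (γ : Config d) (z x : Site d) :
    partialMatching A j (shiftCfg z γ) (x + z) = partialMatching A j γ x + z :=
  partialMatching_congr (looksAlike_shiftCfg γ z x _)

theorem partialMatching_eq_self_shiftCfg_iff (A j : ℕ) (γ : Config d) (z x : Site d) :
    partialMatching A j (shiftCfg z γ) (x + z) = x + z ↔ partialMatching A j γ x = x := by
  rw [partialMatching_shiftCfg, _root_.add_left_inj]

end Congruence

section Measurability

variable {m R q : ℕ} {x y s : Site d}

theorem measurable_of_looksAlike {β : Type*} [MeasurableSpace β] {f : Config d → β} (x : Site d)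
    (r : ℕ) (h : ∀ γ γ', LooksAlike γ γ' 0 x r → f γ' = f γ) : Measurable f := by
  let F : Finset (Site d) := (box d r).image (· + x)
  have hdep : DependsOn f F := fun γ γ' hγ => (h γ γ' fun y hy => by
    rw [add_zero, hγ y (Finset.mem_image.2 ⟨_, hy, sub_add_cancel y x⟩)]).symm
  have : Nonempty β := ⟨f fun _ => true⟩
  obtain ⟨g, hg⟩ := (Function.factorsThrough_iff _).1 (dependsOn_iff_factorsThrough.1 hdep)
  rw [hg]
  exact (measurable_of_finite g).comp (measurable_pi_lambda _ fun _ => measurable_pi_apply _)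

theorem measurable_isRun (m : ℕ) (s : Site d) : Measurable fun γ : Config d => IsRun γ m s :=
  measurable_of_looksAlike s m fun _ _ h => by simpa using isRun_congr h

theorem measurable_isCenter (m R : ℕ) (x s : Site d) :
    Measurable fun γ : Config d => IsCenter γ m R x s :=
  measurable_of_looksAlike x (R + m) fun _ _ h => by simpa using isCenter_congr h

theorem measurable_partialMatching (A j : ℕ) (x : Site d) :
    Measurable fun γ : Config d => partialMatching A j γ x :=
  measurable_of_looksAlike x (localRadius d A j) fun _ _ h => by simpa using partialMatching_congr h

theorem measurable_partialMatching_eq (A j : ℕ) (x y : Site d) :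
    Measurable fun γ : Config d => partialMatching A j γ x = y :=
  (measurable_of_countable (· = y)).comp (measurable_partialMatching A j x)

theorem measurable_sameCell (m R q : ℕ) (x y : Site d) :
    Measurable fun γ : Config d => SameCell γ m R q x y :=
  .exists fun s => (measurable_isCenter m R x s).and ((measurable_isCenter m R y s).and
    measurable_const)

theorem measurable_isCut (A j m R q : ℕ) (x : Site d) :
    Measurable fun γ : Config d => IsCut γ (partialMatching A j γ) m R q x := by
  have hmove : (fun γ : Config d => SameCell γ m R q x (partialMatching A j γ x)) =
      fun γ => ∃ y, partialMatching A j γ x = y ∧ SameCell γ m R q x y := by simp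
  refine (measurable_partialMatching_eq A j x x).not.and (Measurable.not ?_)
  rw [hmove]
  exact .exists fun y => (measurable_partialMatching_eq A j x y).and (measurable_sameCell m R q x y)

theorem isCut_shiftCfg_iff (A j m R q : ℕ) (γ : Config d) (z x : Site d) :
    IsCut (shiftCfg z γ) (partialMatching A j (shiftCfg z γ)) m R q (x + z) ↔
      IsCut γ (partialMatching A j γ) m R q x := by
  rw [IsCut, partialMatching_shiftCfg, sameCell_congr (looksAlike_shiftCfg γ z _ _)
    (looksAlike_shiftCfg γ z _ _), ne_eq, _root_.add_left_inj, IsCut]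

end Measurability

section BernoulliProduct

variable {P : Measure (Config d)}

theorem _root_.IsBernoulliHalfProduct.unique {Q : Measure (Config d)}
    (hP : IsBernoulliHalfProduct P) (hQ : IsBernoulliHalfProduct Q) : P = Q := by
  have := hQ.1
  have hlim : IsProjectiveLimit P fun I : Finset (Site d) => Q.map I.restrict := by
    intro I
    refine Measure.ext_of_singleton fun f => ?_
    have hpre : I.restrict ⁻¹' ({f} : Set (I → Bool)) =
        {γ : Config d | ∀ x ∈ I, γ x = if h : x ∈ I then f ⟨x, h⟩ else true} := by
      ext γ
      simp +contextual [funext_iff, Set.mem_preimage]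
    rw [Measure.map_apply (by fun_prop) (.singleton f),
      Measure.map_apply (by fun_prop) (.singleton f), hpre, hP.2, hQ.2]
  exact hlim.unique fun I => rfl

theorem measurable_apply_eq (x : Site d) (b : Bool) : Measurable fun γ : Config d => γ x = b :=
  (measurable_of_countable (· = b)).comp (measurable_pi_apply x)

theorem measurable_forall_mem_eq (W : Finset (Site d)) (f : Site d → Bool) :
    Measurable fun γ : Config d => ∀ x ∈ W, γ x = f x :=
  .forall fun x => .imp measurable_const (measurable_apply_eq x (f x))

theorem measurable_shiftCfg (z : Site d) : Measurable (shiftCfg z) :=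
  measurable_pi_lambda _ fun x => measurable_pi_apply (x - z)

theorem map_shiftCfg (hP : IsBernoulliHalfProduct P) (z : Site d) : P.map (shiftCfg z) = P := by
  have := hP.1
  refine IsBernoulliHalfProduct.unique
    ⟨Measure.isProbabilityMeasure_map (measurable_shiftCfg z).aemeasurable, fun W f => ?_⟩ hP
  have hpre : shiftCfg z ⁻¹' {γ | ∀ x ∈ W, γ x = f x} =
      {γ | ∀ x ∈ W.map (Equiv.subRight z).toEmbedding, γ x = f (x + z)} := by
    ext γ
    simp only [shiftCfg, Set.mem_preimage, Set.mem_ofPred_eq, Finset.forall_mem_map,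
      Equiv.coe_toEmbedding, Equiv.subRight_apply, sub_add_cancel]
  rw [Measure.map_apply (measurable_shiftCfg z) ?_, hpre, hP.2, Finset.card_map]
  exact (measurable_forall_mem_eq W f).setOf

theorem measureReal_shiftCfg (hP : IsBernoulliHalfProduct P) (z : Site d) {p : Config d → Prop}
    (hp : Measurable p) : P.real {γ | p (shiftCfg z γ)} = P.real {γ | p γ} := by
  conv_rhs => rw [← map_shiftCfg hP z]
  rw [map_measureReal_apply (measurable_shiftCfg z) hp.setOf]
  rfl

/-- The measurable involution of the configuration space that flips the coin at `x`. -/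
def flipAt (x : Site d) : Config d ≃ᵐ Config d :=
  .ofInvolutive (fun γ => Function.update γ x !(γ x)) (fun γ => by simp)
    (measurable_pi_lambda _ fun y => by
      by_cases h : y = x
      · subst h
        simp only [Function.update_self]
        exact (measurable_of_finite (!·)).comp (measurable_pi_apply y)
      · simpa [h] using measurable_pi_apply y)

theorem flipAt_apply_self (x : Site d) (γ : Config d) : flipAt x γ x = !(γ x) :=
  Function.update_self ..

theorem flipAt_apply_of_ne {x y : Site d} (h : y ≠ x) (γ : Config d) : flipAt x γ y = γ y :=
  Function.update_of_ne h ..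

theorem map_flipAt (hP : IsBernoulliHalfProduct P) (x : Site d) : P.map (flipAt x) = P := by
  have := hP.1
  refine IsBernoulliHalfProduct.unique
    ⟨Measure.isProbabilityMeasure_map (flipAt x).measurable.aemeasurable, fun W f => ?_⟩ hP
  have hpre : flipAt x ⁻¹' {γ | ∀ y ∈ W, γ y = f y} = {γ | ∀ y ∈ W, γ y = flipAt x f y} := by
    ext γ
    refine forall₂_congr fun y _ => ?_
    by_cases hy : y = x
    · subst hy
      rw [flipAt_apply_self, flipAt_apply_self, Bool.not_eq_eq_eq_not]
    · rw [flipAt_apply_of_ne hy, flipAt_apply_of_ne hy]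
  rw [(flipAt x).map_apply, hpre, hP.2]

theorem integral_flipAt (hP : IsBernoulliHalfProduct P) (x : Site d) (f : Config d → ℝ) :
    ∫ γ, f (flipAt x γ) ∂P = ∫ γ, f γ ∂P := by
  rw [← integral_map_equiv (flipAt x), map_flipAt hP]

theorem measureReal_flipAt (hP : IsBernoulliHalfProduct P) (x : Site d) (p : Config d → Prop) :
    P.real {γ | p (flipAt x γ)} = P.real {γ | p γ} := by
  conv_rhs => rw [← map_flipAt hP x]
  rw [measureReal_def, measureReal_def, (flipAt x).map_apply]
  rfl

theorem measureReal_and_forall_mem_eq_true (hP : IsBernoulliHalfProduct P) {p : Config d → Prop}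
    (W : Finset (Site d)) (hflip : ∀ x ∈ W, ∀ γ, p (flipAt x γ) ↔ p γ) :
    P.real {γ | p γ ∧ ∀ x ∈ W, γ x = true} = (1 / 2) ^ W.card * P.real {γ | p γ} := by
  have := hP.1
  induction W using Finset.induction_on with
  | empty => simp
  | insert x W hx ih =>
    have ih := ih fun y hy => hflip y (Finset.mem_insert_of_mem hy)
    set E := {γ : Config d | p γ ∧ ∀ y ∈ W, γ y = true} with hE
    set T := {γ : Config d | γ x = true}
    have hinter : {γ : Config d | p γ ∧ ∀ y ∈ insert x W, γ y = true} = E ∩ T := by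
      ext γ
      simp only [hE, T, Finset.forall_mem_insert, Set.mem_inter_iff, Set.mem_ofPred_eq]
      tauto
    have hdiff : {γ | flipAt x γ ∈ E ∩ T} = E \ T := by
      ext γ
      have hW : (∀ y ∈ W, flipAt x γ y = true) ↔ ∀ y ∈ W, γ y = true :=
        forall₂_congr fun y hy => by rw [flipAt_apply_of_ne (ne_of_mem_of_not_mem hy hx)]
      simp only [hE, T, Set.mem_inter_iff, Set.mem_sdiff, Set.mem_ofPred_eq, hW,
        hflip x (Finset.mem_insert_self x W), flipAt_apply_self, Bool.not_eq_true',
        Bool.not_eq_true]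
    have hT : MeasurableSet T := (measurable_apply_eq x true).setOf
    have hsum := measureReal_inter_add_sdiff (μ := P) (s := E) hT
    rw [← hdiff, measureReal_flipAt hP x (· ∈ E ∩ T), Set.ofPred_mem_eq, ih] at hsum
    rw [hinter, Finset.card_insert_of_notMem hx, pow_succ]
    linarith

theorem measureReal_forall_mem_eq_true (hP : IsBernoulliHalfProduct P) (W : Finset (Site d)) :
    P.real {γ | ∀ x ∈ W, γ x = true} = (1 / 2) ^ W.card := by
  simp [measureReal_def, hP.2 W fun _ => true]

theorem card_window (hd : 1 ≤ d) (m : ℕ) (s : Site d) : (window m s).card = m := by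
  rw [window, Finset.card_image_of_injective, Finset.card_range]
  intro t t' h
  simpa [e1] using congrFun h ⟨0, hd⟩

theorem measureReal_isRun (hP : IsBernoulliHalfProduct P) (hd : 1 ≤ d) (m : ℕ) (s : Site d) :
    P.real {γ | IsRun γ m s} = (1 / 2) ^ m := by
  simpa only [card_window hd, IsRun] using measureReal_forall_mem_eq_true hP (window m s)

end BernoulliProduct

section MassTransport

variable {P : Measure (Config d)}

theorem measureReal_exists_isCenter_and (hP : IsBernoulliHalfProduct P)
    {p : Config d → Site d → Prop} (hp : ∀ x, Measurable (p · x))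
    (hshift : ∀ γ z x, p (shiftCfg z γ) (x + z) ↔ p γ x) (m R : ℕ) :
    P.real {γ | (∃ s, IsCenter γ m R 0 s) ∧ p γ 0} =
      ∑ y ∈ box d R, P.real {γ | IsCenter γ m R y 0 ∧ p γ y} := by
  have := hP.1
  have hunion : {γ | (∃ s, IsCenter γ m R 0 s) ∧ p γ 0} =
      ⋃ s ∈ box d R, {γ | IsCenter γ m R 0 s ∧ p γ 0} := by
    ext γ
    simp only [Set.mem_ofPred_eq, Set.mem_iUnion, exists_prop]
    exact ⟨fun ⟨⟨s, hs⟩, h⟩ => ⟨s, by simpa using hs.1, hs, h⟩, fun ⟨s, _, hs, h⟩ => ⟨⟨s, hs⟩, h⟩⟩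
  rw [hunion, measureReal_biUnion_finset
    (fun s _ s' _ hne => Set.disjoint_left.2 fun γ h h' => hne (h.1.unique h'.1))
    fun s _ => ((measurable_isCenter m R 0 s).and (hp 0)).setOf]
  refine Finset.sum_nbij' (-·) (-·) (fun s => neg_mem_box.2) (fun s => neg_mem_box.2)
    (fun s _ => neg_neg s) (fun s _ => neg_neg s) fun s _ => ?_
  rw [← measureReal_shiftCfg hP (-s) ((measurable_isCenter m R (-s) 0).and (hp (-s)))]
  congr 1
  ext γ
  have hcenter := isCenter_congr (s := s) (looksAlike_shiftCfg γ (-s) 0 (R + m))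
  have hpred := hshift γ (-s) 0
  rw [zero_add] at hcenter hpred
  rw [add_neg_cancel] at hcenter
  simp only [Set.mem_ofPred_eq, hcenter, hpred]

theorem card_filter_eq_sum_indicator (G : Finset (Site d)) (p : Config d → Site d → Prop)
    [∀ γ, DecidablePred (p γ)] (γ : Config d) :
    ((G.filter (p γ)).card : ℝ) = ∑ y ∈ G, Set.indicator {γ | p γ y} 1 γ := by
  simp [Set.indicator_apply]

theorem integrable_card_filter [IsFiniteMeasure P] (G : Finset (Site d))
    {p : Config d → Site d → Prop} [∀ γ, DecidablePred (p γ)] (hp : ∀ x, Measurable (p · x)) :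
    Integrable (fun γ => ((G.filter (p γ)).card : ℝ)) P := by
  simp only [card_filter_eq_sum_indicator]
  exact integrable_finsetSum _ fun y _ => (integrable_const (1 : ℝ)).indicator (hp y).setOf

theorem sum_measureReal_eq_integral_card [IsFiniteMeasure P] (G : Finset (Site d))
    {p : Config d → Site d → Prop} [∀ γ, DecidablePred (p γ)] (hp : ∀ x, Measurable (p · x)) :
    ∑ y ∈ G, P.real {γ | p γ y} = ∫ γ, ((G.filter (p γ)).card : ℝ) ∂P := by
  simp only [card_filter_eq_sum_indicator]
  refine Eq.symm <| (integral_finsetSum _ fun y _ =>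
    (integrable_const (1 : ℝ)).indicator (hp y).setOf).trans ?_
  exact Finset.sum_congr rfl fun y _ => integral_indicator_one (hp y).setOf

theorem measurable_centeredSpin (m R : ℕ) (y : Site d) :
    Measurable fun γ : Config d => centeredSpin γ m R y :=
  .ite (measurable_isCenter m R y 0).setOf
    (.ite (measurable_apply_eq y true).setOf measurable_const measurable_const) measurable_const

theorem measurable_excess (m R : ℕ) (G : Finset (Site d)) :
    Measurable fun γ : Config d => excess γ m R G :=
  Finset.measurable_fun_sum G fun y _ => measurable_centeredSpin m R y

theorem integrable_abs_excess [IsFiniteMeasure P] (m R : ℕ) (G : Finset (Site d)) :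
    Integrable (fun γ => |(excess γ m R G : ℝ)|) P := by
  refine .of_bound (C := G.card) ?_ (.of_forall fun γ => ?_)
  · exact ((measurable_of_countable fun n : ℤ => |(n : ℝ)|).comp
      (measurable_excess m R G)).aestronglyMeasurable
  · rw [Real.norm_eq_abs, abs_abs]
    exact_mod_cast abs_excess_le γ m R G

/-- The probability that the origin is still unmatched after stage `j`. -/
def unmatchedProb (P : Measure (Config d)) (A j : ℕ) : ℝ :=
  P.real {γ | partialMatching A j γ 0 = 0}

theorem sum_measureReal_unmatched_gridBlock_le [IsFiniteMeasure P] {A j m R q : ℕ}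
    (hm : runLength d A (level A (j + 1)) = m) (hR : radius A (level A (j + 1)) = R)
    (hq : 2 ^ (j + 1) = q) (v : Site d) :
    ∑ y ∈ gridBlock R q v, P.real {γ | IsCenter γ m R y 0 ∧ partialMatching A (j + 1) γ y = y} ≤
      ∫ γ, |(excess γ m R (gridBlock R q v) : ℝ)| ∂P +
        ∑ y ∈ gridBlock R q v,
          P.real {γ | IsCenter γ m R y 0 ∧ IsCut γ (partialMatching A j γ) m R q y} := by
  classical
  have hstep (γ : Config d) :
      partialMatching A (j + 1) γ = step γ (partialMatching A j γ) m R q := by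
    rw [← hm, ← hR, ← hq]
    rfl
  have hunmatched (y : Site d) :
      Measurable fun γ => IsCenter γ m R y 0 ∧ step γ (partialMatching A j γ) m R q y = y := by
    simpa only [hstep] using
      (measurable_isCenter m R y 0).and (measurable_partialMatching_eq A (j + 1) y y)
  have hcut (y : Site d) :
      Measurable fun γ => IsCenter γ m R y 0 ∧ IsCut γ (partialMatching A j γ) m R q y :=
    (measurable_isCenter m R y 0).and (measurable_isCut A j m R q y)
  simp only [hstep]
  rw [sum_measureReal_eq_integral_card _ hunmatched, sum_measureReal_eq_integral_card _ hcut,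
    ← integral_add (integrable_abs_excess m R _) (integrable_card_filter _ hcut)]
  refine integral_mono (integrable_card_filter _ hunmatched)
    ((integrable_abs_excess m R _).add (integrable_card_filter _ hcut)) fun γ => ?_
  have hcount :=
    card_unmatched_gridBlock_le (isPartialMatching_partialMatching A j γ) m R q v
  rify at hcount
  convert hcount

theorem unmatchedProb_succ_le_add (hP : IsBernoulliHalfProduct P) {A j m R q : ℕ}
    (hm : runLength d A (level A (j + 1)) = m) (hR : radius A (level A (j + 1)) = R)
    (hq : 2 ^ (j + 1) = q) :
    unmatchedProb P A (j + 1) ≤ P.real {γ | ¬∃ s, IsCenter γ m R 0 s} +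
      ∑ v ∈ (box d R).image (gridIndex q), ∫ γ, |(excess γ m R (gridBlock R q v) : ℝ)| ∂P +
      P.real {γ | (∃ s, IsCenter γ m R 0 s) ∧ IsCut γ (partialMatching A j γ) m R q 0} := by
  have := hP.1
  have hsplit : {γ : Config d | partialMatching A (j + 1) γ 0 = 0} ⊆
      {γ | ¬∃ s, IsCenter γ m R 0 s} ∪
        {γ | (∃ s, IsCenter γ m R 0 s) ∧ partialMatching A (j + 1) γ 0 = 0} := fun γ h =>
    (em (∃ s, IsCenter γ m R 0 s)).symm.imp_right fun hs => ⟨hs, h⟩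
  have hblocks (f : Site d → ℝ) := Finset.sum_fiberwise_of_maps_to (f := f)
    fun y hy => Finset.mem_image_of_mem (gridIndex q) (s := box d R) hy
  refine ((measureReal_mono hsplit).trans (measureReal_union_le _ _)).trans ?_
  rw [add_assoc, add_le_add_iff_left,
    measureReal_exists_isCenter_and hP (fun x => measurable_partialMatching_eq A (j + 1) x x)
      (partialMatching_eq_self_shiftCfg_iff A (j + 1)),
    measureReal_exists_isCenter_and hP (measurable_isCut A j m R q) (isCut_shiftCfg_iff A j m R q),
    ← hblocks, ← hblocks, ← Finset.sum_add_distrib]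
  exact Finset.sum_le_sum fun v _ => sum_measureReal_unmatched_gridBlock_le hm hR hq v

end MassTransport

section SecondMoment

variable {P : Measure (Config d)} {γ : Config d} {m R : ℕ} {x y : Site d}

/-- There is a run at the origin, and flipping the coin at `x` may create or destroy another run. -/
def IsPivotal (γ : Config d) (m : ℕ) (x : Site d) : Prop :=
  IsRun γ m 0 ∧ ∃ s, x ∈ window m s ∧ ∀ y ∈ (window m s).erase x, γ y = true

theorem measurable_isPivotal (m : ℕ) (x : Site d) :
    Measurable fun γ : Config d => IsPivotal γ m x :=
  (measurable_isRun m 0).and <| Measurable.exists fun _ => measurable_const.and <|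
    measurable_forall_mem_eq _ fun _ => true

theorem isRun_flipAt_iff {s : Site d}
    (h : x ∈ window m s → ¬∀ y ∈ (window m s).erase x, γ y = true) :
    IsRun (flipAt x γ) m s ↔ IsRun γ m s := by
  by_cases hx : x ∈ window m s
  · refine iff_of_false (fun hrun => h hx fun y hy => ?_)
      fun hrun => h hx fun y hy => hrun y (Finset.mem_of_mem_erase hy)
    rw [← flipAt_apply_of_ne (Finset.ne_of_mem_erase hy) γ]
    exact hrun y (Finset.mem_of_mem_erase hy)
  · exact forall₂_congr fun y hy => by rw [flipAt_apply_of_ne (ne_of_mem_of_not_mem hy hx)]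

theorem isCenter_flipAt_iff (hx : x ∉ window m 0) (h : ¬IsPivotal γ m x) :
    IsCenter (flipAt x γ) m R y 0 ↔ IsCenter γ m R y 0 := by
  have hzero : IsRun (flipAt x γ) m 0 ↔ IsRun γ m 0 := isRun_flipAt_iff fun hx' => absurd hx' hx
  by_cases hrun : IsRun γ m 0
  · have hiff (s) : IsRun (flipAt x γ) m s ↔ IsRun γ m s :=
      isRun_flipAt_iff fun hs hones => h ⟨hrun, s, hs, hones⟩
    simp only [IsCenter, hiff]
  · exact iff_of_false (fun hc => hrun (hzero.1 hc.2.1)) fun hc => hrun hc.2.1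

theorem card_window_union_erase {s : Site d} (hd : 1 ≤ d) (hx : x ∉ box d (3 * m))
    (hxs : x ∈ window m s) :
    (window m 0 ∪ (window m s).erase x).card = 2 * m - 1 := by
  have hdisj : Disjoint (window m 0) ((window m s).erase x) := by
    refine Finset.disjoint_left.2 fun z hz hzs => hx ?_
    have hzs' := neg_mem_box.2 (sub_mem_box_of_mem_window (Finset.mem_of_mem_erase hzs))
    have hsum := add_mem_box (add_mem_box (sub_mem_box_of_mem_window hz) hzs')
      (sub_mem_box_of_mem_window hxs)
    refine box_mono (by omega) (?_ : x ∈ box d (m + m + m))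
    simpa using hsum
  have hm : 0 < m := (card_window hd m s) ▸ Finset.card_pos.2 ⟨x, hxs⟩
  rw [Finset.card_union_of_disjoint hdisj, Finset.card_erase_of_mem hxs, card_window hd,
    card_window hd]
  omega

theorem measureReal_isPivotal_le (hP : IsBernoulliHalfProduct P) (hd : 1 ≤ d)
    (hx : x ∉ box d (3 * m)) : P.real {γ | IsPivotal γ m x} ≤ 2 * m * (1 / 2) ^ (2 * m) := by
  have := hP.1
  set start : ℕ → Site d := fun t => x - (t : ℤ) • e1 d with hstart
  have hmem : ∀ t ∈ Finset.range m, x ∈ window m (start t) := fun t ht =>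
    Finset.mem_image.2 ⟨t, ht, sub_add_cancel _ _⟩
  have hcover : {γ | IsPivotal γ m x} ⊆ ⋃ t ∈ Finset.range m,
      {γ | ∀ y ∈ window m 0 ∪ (window m (start t)).erase x, γ y = true} := by
    rintro γ ⟨hrun, s, hs, hones⟩
    obtain ⟨t, ht, rfl⟩ := Finset.mem_image.1 hs
    refine Set.mem_biUnion ht fun y hy => ?_
    simp only [hstart, add_sub_cancel_right, Finset.mem_union] at hy
    exact hy.elim (hrun y) (hones y)
  refine ((measureReal_mono hcover (measure_ne_top _ _)).trans
    (measureReal_biUnion_finset_le _ _)).trans_eq ?_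
  have hpow : ∀ t ∈ Finset.range m, P.real
      {γ | ∀ y ∈ window m 0 ∪ (window m (start t)).erase x, γ y = true} =
        2 * (1 / 2) ^ (2 * m) := fun t ht => by
    rw [measureReal_forall_mem_eq_true hP, card_window_union_erase hd hx (hmem t ht),
      ← pow_sub_one_mul (n := 2 * m) (by have := Finset.mem_range.1 ht; omega)]
    ring
  rw [Finset.sum_congr rfl hpow, Finset.sum_const, Finset.card_range, nsmul_eq_mul,
    mul_left_comm, mul_assoc]

theorem centeredSpin_eq_zero (h : ¬IsRun γ m 0) : centeredSpin γ m R y = 0 :=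
  if_neg fun hc => h hc.2.1

theorem pm1_flipAt_self (γ : Config d) (x : Site d) : pm1 (flipAt x γ) x = -pm1 γ x := by
  rw [pm1, pm1, flipAt_apply_self]
  cases γ x <;> rfl

theorem pm1_flipAt_of_ne (hne : y ≠ x) (γ : Config d) : pm1 (flipAt x γ) y = pm1 γ y := by
  rw [pm1, pm1, flipAt_apply_of_ne hne]

open Classical in
theorem centeredSpin_flipAt_self (hx : x ∉ window m 0) (h : ¬IsPivotal γ m x) :
    centeredSpin (flipAt x γ) m R x = -centeredSpin γ m R x := by
  unfold centeredSpin
  rw [if_congr (isCenter_flipAt_iff hx h) (pm1_flipAt_self γ x) rfl, apply_ite Neg.neg, neg_zero]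

open Classical in
theorem centeredSpin_flipAt_of_ne (hne : y ≠ x) (hx : x ∉ window m 0) (h : ¬IsPivotal γ m x) :
    centeredSpin (flipAt x γ) m R y = centeredSpin γ m R y :=
  if_congr (isCenter_flipAt_iff hx h) (pm1_flipAt_of_ne hne γ) rfl

theorem integrable_centeredSpin_mul [IsFiniteMeasure P] (m R : ℕ) (x y : Site d) :
    Integrable (fun γ => (centeredSpin γ m R x * centeredSpin γ m R y : ℝ)) P := by
  have hmeas (z : Site d) : Measurable fun γ : Config d => (centeredSpin γ m R z : ℝ) :=
    (measurable_of_countable _).comp (measurable_centeredSpin m R z)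
  have hbound (γ : Config d) (z : Site d) : |(centeredSpin γ m R z : ℝ)| ≤ 1 := by
    exact_mod_cast abs_centeredSpin_le_one γ m R z
  refine .of_bound (C := 1) ((hmeas x).mul (hmeas y)).aestronglyMeasurable (.of_forall fun γ => ?_)
  rw [Real.norm_eq_abs, abs_mul]
  exact mul_le_one₀ (hbound γ x) (abs_nonneg _) (hbound γ y)

theorem centeredSpin_mul_le_one (γ : Config d) (m R : ℕ) (x y : Site d) :
    (centeredSpin γ m R x * centeredSpin γ m R y : ℝ) ≤ 1 := by
  have h := mul_le_one₀ (abs_centeredSpin_le_one γ m R x) (abs_nonneg _)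
    (abs_centeredSpin_le_one γ m R y)
  exact_mod_cast (le_abs_self _).trans ((abs_mul _ _).trans_le h)

theorem integral_centeredSpin_mul_le (hP : IsBernoulliHalfProduct P) (hd : 1 ≤ d) (m R : ℕ)
    (x y : Site d) :
    ∫ γ, (centeredSpin γ m R x * centeredSpin γ m R y : ℝ) ∂P ≤ (1 / 2) ^ m := by
  have := hP.1
  rw [← measureReal_isRun hP hd m 0, ← integral_indicator_one (measurable_isRun m 0).setOf]
  refine integral_mono (integrable_centeredSpin_mul m R x y)
    ((integrable_const (1 : ℝ)).indicator (measurable_isRun m 0).setOf) fun γ => ?_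
  by_cases hrun : IsRun γ m 0
  · simpa [hrun] using centeredSpin_mul_le_one γ m R x y
  · simp [hrun, centeredSpin_eq_zero hrun]

-- Unless `x` is pivotal, flipping the coin at `x` changes the sign of the product.
theorem integral_centeredSpin_mul_le_of_notMem_box (hP : IsBernoulliHalfProduct P) (hd : 1 ≤ d)
    (m R : ℕ) (hne : x ≠ y) (hx : x ∉ box d (3 * m)) :
    ∫ γ, (centeredSpin γ m R x * centeredSpin γ m R y : ℝ) ∂P ≤ 2 * m * (1 / 2) ^ (2 * m) := by
  have := hP.1
  have hxrun : x ∉ window m 0 := fun h =>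
    hx (box_mono (by omega) (sub_zero x ▸ sub_mem_box_of_mem_window h))
  set F : Config d → ℝ := fun γ => centeredSpin γ m R x * centeredSpin γ m R y with hF
  have hint : Integrable F P := integrable_centeredSpin_mul m R x y
  have hpair (γ : Config d) : F γ + F (flipAt x γ) ≤ 2 * {γ | IsPivotal γ m x}.indicator 1 γ := by
    by_cases hpiv : IsPivotal γ m x
    · have h := add_le_add (centeredSpin_mul_le_one γ m R x y)
        (centeredSpin_mul_le_one (flipAt x γ) m R x y)
      simpa [hpiv, one_add_one_eq_two] using h
    · simp [hF, hpiv, centeredSpin_flipAt_self hxrun hpiv,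
        centeredSpin_flipAt_of_ne hne.symm hxrun hpiv]
  have hflip : MeasurePreserving (flipAt x) P P := ⟨(flipAt x).measurable, map_flipAt hP x⟩
  have hint' : Integrable (fun γ => F (flipAt x γ)) P :=
    (hflip.integrable_comp_emb (flipAt x).measurableEmbedding).2 hint
  have hdouble : ∫ γ, F γ ∂P + ∫ γ, F γ ∂P ≤ 2 * P.real {γ | IsPivotal γ m x} :=
    calc ∫ γ, F γ ∂P + ∫ γ, F γ ∂P = ∫ γ, (F γ + F (flipAt x γ)) ∂P := by
          rw [integral_add hint hint', integral_flipAt hP x F]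
      _ ≤ ∫ γ, 2 * {γ | IsPivotal γ m x}.indicator 1 γ ∂P :=
          integral_mono (hint.add hint') (((integrable_const (1 : ℝ)).indicator
            (measurable_isPivotal m x).setOf).const_mul 2) hpair
      _ = 2 * P.real {γ | IsPivotal γ m x} := by
          rw [integral_const_mul, integral_indicator_one (measurable_isPivotal m x).setOf]
  rw [← two_mul] at hdouble
  exact (le_of_mul_le_mul_left hdouble two_pos).trans (measureReal_isPivotal_le hP hd hx)

theorem excess_sq_eq_sum (γ : Config d) (m R : ℕ) (G : Finset (Site d)) :
    (excess γ m R G : ℝ) ^ 2 =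
      ∑ x ∈ G, ∑ y ∈ G, (centeredSpin γ m R x * centeredSpin γ m R y : ℝ) := by
  rw [excess, Int.cast_sum, sq, Finset.sum_mul_sum]

theorem integral_excess_sq_le (hP : IsBernoulliHalfProduct P) (hd : 1 ≤ d) (m R : ℕ)
    (G : Finset (Site d)) :
    ∫ γ, (excess γ m R G : ℝ) ^ 2 ∂P ≤ G.card * (1 / 2) ^ m +
      (6 * m + 1) ^ d * G.card * (1 / 2) ^ m + G.card * G.card * (2 * m * (1 / 2) ^ (2 * m)) := by
  have := hP.1
  classical
  set h : ℝ := (1 / 2) ^ m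
  have hh : 0 ≤ h := by positivity
  have hterm (x y : Site d) : ∫ γ, (centeredSpin γ m R x * centeredSpin γ m R y : ℝ) ∂P ≤
      (if x = y then h else 0) + (if x ∈ box d (3 * m) then h else 0) +
        2 * m * (1 / 2) ^ (2 * m) := by
    have hnonneg : (0 : ℝ) ≤ 2 * m * (1 / 2) ^ (2 * m) := by positivity
    have hgeneral := integral_centeredSpin_mul_le hP hd m R x y
    split_ifs with hxy hx hx
    · linarith
    · linarith
    · linarith
    · simpa using integral_centeredSpin_mul_le_of_notMem_box hP hd m R hxy hx
  have hnear : ((G ∩ box d (3 * m)).card : ℝ) ≤ (6 * m + 1) ^ d := by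
    have hcard := Finset.card_le_card (Finset.inter_subset_right (s₁ := G) (s₂ := box d (3 * m)))
    rw [card_box, ← mul_assoc] at hcard
    exact_mod_cast hcard
  simp only [excess_sq_eq_sum]
  rw [integral_finsetSum _ fun x _ => integrable_finsetSum _ fun y _ =>
    integrable_centeredSpin_mul m R x y]
  calc _ ≤ ∑ x ∈ G, ∑ y ∈ G, ((if x = y then h else 0) + (if x ∈ box d (3 * m) then h else 0) +
        2 * m * (1 / 2) ^ (2 * m)) := Finset.sum_le_sum fun x _ => by
        rw [integral_finsetSum _ fun y _ => integrable_centeredSpin_mul m R x y]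
        exact Finset.sum_le_sum fun y _ => hterm x y
    _ = G.card * h + (G ∩ box d (3 * m)).card * G.card * h +
        G.card * G.card * (2 * m * (1 / 2) ^ (2 * m)) := by
        simp only [Finset.sum_add_distrib, Finset.sum_ite_eq, Finset.sum_const, nsmul_eq_mul,
          Finset.sum_ite_mem, Finset.inter_self, ← Finset.mul_sum]
        ring
    _ ≤ _ := by gcongr

theorem integral_abs_excess_le (hP : IsBernoulliHalfProduct P) (hd : 1 ≤ d) (m R : ℕ)
    (G : Finset (Site d)) {T : ℝ} (hT : 0 < T) :
    ∫ γ, |(excess γ m R G : ℝ)| ∂P ≤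
      T * (1 / 2) ^ m + (G.card * (1 / 2) ^ m + (6 * m + 1) ^ d * G.card * (1 / 2) ^ m +
        G.card * G.card * (2 * m * (1 / 2) ^ (2 * m))) / T := by
  have := hP.1
  have hrun : Integrable (fun γ => T * {γ : Config d | IsRun γ m 0}.indicator 1 γ) P :=
    ((integrable_const (1 : ℝ)).indicator (measurable_isRun m 0).setOf).const_mul T
  have hsq : Integrable (fun γ => (excess γ m R G : ℝ) ^ 2 / T) P := by
    simp only [excess_sq_eq_sum]
    exact (integrable_finsetSum _ fun x _ => integrable_finsetSum _ fun y _ =>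
      integrable_centeredSpin_mul m R x y).div_const T
  have hpoint (γ : Config d) : |(excess γ m R G : ℝ)| ≤
      T * {γ | IsRun γ m 0}.indicator 1 γ + (excess γ m R G : ℝ) ^ 2 / T := by
    by_cases hrun : IsRun γ m 0
    · have hamgm := two_mul_le_add_sq T |(excess γ m R G : ℝ)|
      rw [sq_abs] at hamgm
      simp only [hrun, Set.mem_ofPred_eq, Set.indicator_of_mem, Pi.one_apply, mul_one]
      rw [← sub_le_iff_le_add', le_div_iff₀ hT]
      nlinarith [mul_nonneg hT.le (abs_nonneg (excess γ m R G : ℝ))]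
    · have hzero : excess γ m R G = 0 := Finset.sum_eq_zero fun _ _ => centeredSpin_eq_zero hrun
      simp [hrun, hzero]
  refine (integral_mono (integrable_abs_excess m R G) (hrun.add hsq) hpoint).trans ?_
  rw [integral_add' hrun hsq, integral_const_mul, integral_div,
    integral_indicator_one (measurable_isRun m 0).setOf, measureReal_isRun hP hd]
  gcongr
  exact integral_excess_sq_le hP hd m R G

end SecondMoment

section NoCenter

variable {P : Measure (Config d)} {m R : ℕ}

theorem isRun_flipAt_of_notMem {γ : Config d} {x s : Site d} (hx : x ∉ window m s) :
    IsRun (flipAt x γ) m s ↔ IsRun γ m s :=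
  isRun_flipAt_iff fun h => absurd h hx

theorem measureReal_forall_not_isRun (hP : IsBernoulliHalfProduct P) (hd : 1 ≤ d)
    {T : Finset (Site d)} (hT : (T : Set (Site d)).PairwiseDisjoint (window m)) :
    P.real {γ | ∀ s ∈ T, ¬IsRun γ m s} = (1 - (1 / 2) ^ m) ^ T.card := by
  classical
  have := hP.1
  induction T using Finset.induction_on with
  | empty => simp
  | insert s T hs ih =>
    rw [Finset.coe_insert] at hT
    have hflip : ∀ x ∈ window m s, ∀ γ : Config d,
        (∀ s' ∈ T, ¬IsRun (flipAt x γ) m s') ↔ ∀ s' ∈ T, ¬IsRun γ m s' := fun x hx γ =>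
      forall₂_congr fun s' hs' => not_congr <| isRun_flipAt_of_notMem <|
        Finset.disjoint_left.1 (hT (Set.mem_insert _ _) (Set.mem_insert_of_mem _ hs')
          (ne_of_mem_of_not_mem hs' hs).symm) hx
    have hrun := measureReal_and_forall_mem_eq_true hP
      (p := fun γ => ∀ s' ∈ T, ¬IsRun γ m s') (window m s) hflip
    have hdiff := measureReal_inter_add_sdiff (μ := P)
      (s := {γ | ∀ s' ∈ T, ¬IsRun γ m s'})
      (measurable_isRun m s).setOf
    rw [ih (hT.subset (Set.subset_insert _ _)), card_window hd] at hrun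
    rw [ih (hT.subset (Set.subset_insert _ _))] at hdiff
    have hinsert : {γ : Config d | ∀ s' ∈ insert s T, ¬IsRun γ m s'} =
        {γ | ∀ s' ∈ T, ¬IsRun γ m s'} \ {γ | IsRun γ m s} := by
      ext γ
      simp only [Finset.forall_mem_insert, Set.mem_ofPred_eq, Set.mem_sdiff, and_comm]
    rw [hinsert, Finset.card_insert_of_notMem hs, pow_succ]
    have hinter : {γ : Config d | ∀ s' ∈ T, ¬IsRun γ m s'} ∩ {γ | IsRun γ m s} =
        {γ | (∀ s' ∈ T, ¬IsRun γ m s') ∧ ∀ x ∈ window m s, γ x = true} := rfl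
    rw [hinter, hrun] at hdiff
    linarith

theorem eq_of_mem_window_of_modEq (hd : 0 < d) {s s' z : Site d}
    (hmod : s ⟨0, hd⟩ ≡ s' ⟨0, hd⟩ [ZMOD m]) (hz : z ∈ window m s) (hz' : z ∈ window m s') :
    s = s' := by
  obtain ⟨a, ha, rfl⟩ := Finset.mem_image.1 hz
  obtain ⟨b, hb, hab⟩ := Finset.mem_image.1 hz'
  have hcoord : s' ⟨0, hd⟩ + b = s ⟨0, hd⟩ + a := by simpa [e1] using congrFun hab ⟨0, hd⟩
  have habmod : (a : ℤ) ≡ b [ZMOD m] := hmod.add_left_cancel (hcoord ▸ Int.ModEq.refl _)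
  obtain rfl := (Int.natCast_modEq_iff.1 habmod).eq_of_lt_of_lt (Finset.mem_range.1 ha)
    (Finset.mem_range.1 hb)
  exact (add_right_cancel hab).symm

theorem exists_pairwiseDisjoint_window (hd : 0 < d) (hm : 0 < m) (R : ℕ) :
    ∃ T ⊆ box d R, (T : Set (Site d)).PairwiseDisjoint (window m) ∧ (R : ℝ) ^ d / m ≤ T.card := by
  set residue : Site d → ℤ := fun s => s ⟨0, hd⟩ % m
  have hm' : (m : ℤ) ≠ 0 := by exact_mod_cast hm.ne'
  have hmaps : ∀ s ∈ box d R, residue s ∈ Finset.Ico (0 : ℤ) m := fun s _ =>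
    Finset.mem_Ico.2 ⟨Int.emod_nonneg _ hm', Int.emod_lt_of_pos _ (by exact_mod_cast hm)⟩
  obtain ⟨r, -, hr⟩ := Finset.exists_le_card_fiber_of_nsmul_le_card_of_maps_to
    (b := (R : ℝ) ^ d / m) hmaps (Finset.nonempty_Ico.2 (by exact_mod_cast hm)) <| by
      rw [Int.card_Ico, sub_zero, Int.toNat_natCast, nsmul_eq_mul,
        mul_div_cancel₀ _ (by exact_mod_cast hm.ne'), card_box]
      exact_mod_cast Nat.pow_le_pow_left (by omega) d
  refine ⟨_, Finset.filter_subset _ _, fun s hs s' hs' hne => ?_, hr⟩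
  refine Finset.disjoint_left.2 fun z hz hz' => hne (eq_of_mem_window_of_modEq hd ?_ hz hz')
  exact (Finset.mem_filter.1 hs).2.trans (Finset.mem_filter.1 hs').2.symm

theorem measureReal_not_exists_isCenter_le (hP : IsBernoulliHalfProduct P) (hd : 1 ≤ d)
    (hm : 0 < m) (R : ℕ) :
    P.real {γ | ¬∃ s, IsCenter γ m R 0 s} ≤ Real.exp (-((1 / 2) ^ m * R ^ d / m)) := by
  have := hP.1
  obtain ⟨T, hTbox, hT, hcard⟩ := exists_pairwiseDisjoint_window hd hm R
  have hsub : {γ : Config d | ¬∃ s, IsCenter γ m R 0 s} ⊆ {γ | ∀ s ∈ T, ¬IsRun γ m s} :=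
    fun γ hγ s hs hrun => hγ (exists_isCenter (by simpa using hTbox hs) hrun)
  calc P.real {γ | ¬∃ s, IsCenter γ m R 0 s} ≤ (1 - (1 / 2) ^ m) ^ T.card :=
        (measureReal_mono hsub).trans_eq (measureReal_forall_not_isRun hP hd hT)
    _ ≤ Real.exp (-(1 / 2) ^ m) ^ T.card := by
        gcongr
        · exact sub_nonneg.2 (pow_le_one₀ (by norm_num) (by norm_num))
        · exact Real.one_sub_le_exp_neg _
    _ = Real.exp (-((1 / 2) ^ m * T.card)) := by rw [← Real.exp_nat_mul, mul_neg, mul_comm]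
    _ ≤ _ := by
        rw [mul_div_assoc]
        gcongr

end NoCenter

section Cardinality

variable {R q : ℕ}

theorem card_gridBlock_le (R : ℕ) (hq : 0 < q) (v : Site d) : (gridBlock R q v).card ≤ q ^ d := by
  have hsub : gridBlock R q v ⊆ Fintype.piFinset fun k => Finset.Ico (v k * q) (v k * q + q) := by
    intro y hy
    refine Fintype.mem_piFinset.2 fun k => Finset.mem_Ico.2 ?_
    exact (Int.ediv_eq_iff_of_pos (by exact_mod_cast hq)).1 (congrFun (mem_gridBlock.1 hy).2 k)
  refine (Finset.card_le_card hsub).trans_eq ?_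
  simp [Fintype.card_piFinset]

theorem card_image_gridIndex_le {c : ℕ} (hq : 0 < q) (hc : 0 < c) :
    ((box d (c * q)).image (gridIndex q)).card ≤ (3 * c) ^ d := by
  have hsub : (box d (c * q)).image (gridIndex q) ⊆ box d c := by
    refine Finset.image_subset_iff.2 fun y hy => mem_box.2 fun k => ?_
    have hk := abs_le.1 (mem_box.1 hy k)
    have hq' : (0 : ℤ) < q := by exact_mod_cast hq
    push_cast at hk
    exact abs_le.2 ⟨(Int.le_ediv_iff_mul_le hq').2 (by linarith),
      Int.ediv_le_of_le_mul hq' hk.2⟩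
  refine (Finset.card_le_card hsub).trans ?_
  rw [card_box]
  gcongr
  omega

theorem abs_le_of_abs_sub_mul_le {a b : ℤ} {c t : ℕ} (hq : 0 < q) (htq : 2 * t ≤ q)
    (ha : |a| ≤ c * q + t) (hb : |a - b * q| ≤ t) : |b| ≤ c + 1 := by
  have := (abs_sub_abs_le_abs_sub (b * q) a).trans_eq (abs_sub_comm _ _)
  rw [abs_mul, Nat.abs_cast] at this
  have hq' : 0 < (q : ℤ) := by exact_mod_cast hq
  by_contra! hlt
  have hmul := mul_le_mul_of_nonneg_right (Int.add_one_le_of_lt hlt) hq'.le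
  have htq' : (2 * t : ℤ) ≤ q := by exact_mod_cast htq
  linarith [hmul, htq']

/-- The integers within distance `t` of some `b * q` with `|b| ≤ c + 1`. -/
def gridStrip (c q t : ℕ) : Finset ℤ :=
  (Finset.Icc (-((c : ℤ) + 1)) (c + 1) ×ˢ Finset.Icc (-(t : ℤ)) t).image fun p => p.1 * q + p.2

theorem card_gridStrip_le {c t : ℕ} (hc : 0 < c) (q : ℕ) (ht : 0 < t) :
    (gridStrip c q t).card ≤ 5 * c * (3 * t) := by
  refine Finset.card_image_le.trans ?_
  rw [Finset.card_product, Int.card_Icc, Int.card_Icc]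
  exact Nat.mul_le_mul (by omega) (by omega)

theorem nearGrid_subset_biUnion_piFinset {c t : ℕ} (hq : 0 < q) (htq : 2 * t ≤ q) :
    nearGrid d (c * q) q t ⊆ Finset.univ.biUnion fun k => Fintype.piFinset <|
      Function.update (fun _ => Finset.Icc (-((c * q + t : ℕ) : ℤ)) (c * q + t : ℕ)) k
        (gridStrip c q t) := by
  intro s hs
  obtain ⟨hbox, k, b, hb⟩ := mem_nearGrid.1 hs
  refine Finset.mem_biUnion.2 ⟨k, Finset.mem_univ _, Fintype.mem_piFinset.2 fun k' => ?_⟩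
  obtain rfl | hne := eq_or_ne k' k
  · rw [Function.update_self]
    have hbc := abs_le_of_abs_sub_mul_le hq htq (by simpa using mem_box.1 hbox k') hb
    exact Finset.mem_image.2 ⟨(b, s k' - b * q), Finset.mem_product.2
      ⟨Finset.mem_Icc.2 (abs_le.1 hbc), Finset.mem_Icc.2 (abs_le.1 hb)⟩, by simp⟩
  · rw [Function.update_of_ne hne]
    exact Finset.mem_Icc.2 (abs_le.1 (mem_box.1 hbox k'))

theorem card_piFinset_update {ι α : Type*} [Fintype ι] [DecidableEq ι] (s t : Finset α) (k : ι) :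
    (Fintype.piFinset (Function.update (fun _ => s) k t)).card =
      s.card ^ (Fintype.card ι - 1) * t.card := by
  rw [Fintype.card_piFinset, ← Finset.prod_erase_mul _ _ (Finset.mem_univ k),
    Function.update_self, Finset.prod_congr rfl fun k' hk' => by
      rw [Function.update_of_ne (Finset.ne_of_mem_erase hk')],
    Finset.prod_const, Finset.card_erase_of_mem (Finset.mem_univ k), Finset.card_univ]

theorem card_nearGrid_mul_le {c t : ℕ} (hc : 0 < c) (ht : 0 < t) (htq : 2 * t ≤ q) :
    (nearGrid d (c * q) q t).card * q ≤ 3 * d * t * (5 * (c * q)) ^ d := by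
  have hqR : q ≤ c * q := Nat.le_mul_of_pos_left q hc
  set side : Finset ℤ := Finset.Icc (-((c * q + t : ℕ) : ℤ)) (c * q + t : ℕ) with hside
  have hside_card : side.card ≤ 5 * (c * q) := by
    rw [hside, Int.card_Icc]
    omega
  have hpi (k : Fin d) :
      (Fintype.piFinset (Function.update (fun _ => side) k (gridStrip c q t))).card * q ≤
        3 * t * (5 * (c * q)) ^ d := by
    have hd : d - 1 + 1 = d := Nat.sub_add_cancel k.pos
    calc _ ≤ (5 * (c * q)) ^ (d - 1) * (5 * c * (3 * t)) * q := by
          rw [card_piFinset_update, Fintype.card_fin]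
          gcongr
          exact card_gridStrip_le hc q ht
      _ = 3 * t * ((5 * (c * q)) ^ (d - 1) * (5 * (c * q))) := by ring
      _ = _ := by rw [← pow_succ, hd]
  have hcard := (Finset.card_le_card (nearGrid_subset_biUnion_piFinset (d := d) (c := c)
    (by omega) htq)).trans Finset.card_biUnion_le
  calc _ ≤ (∑ k : Fin d,
          (Fintype.piFinset (Function.update (fun _ => side) k (gridStrip c q t))).card) * q :=
        Nat.mul_le_mul_right q hcard
    _ ≤ ∑ _k : Fin d, 3 * t * (5 * (c * q)) ^ d := by
        rw [Finset.sum_mul]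
        exact Finset.sum_le_sum fun k _ => hpi k
    _ = _ := by
        rw [Finset.sum_const, Finset.card_univ, Fintype.card_fin, smul_eq_mul]
        ring

end Cardinality

section CutProbability

variable {P : Measure (Config d)}

theorem measureReal_unmatched_and_isRun (hP : IsBernoulliHalfProduct P) (hd : 1 ≤ d) {A i m : ℕ}
    {s : Site d} (hs : s ∉ box d (localRadius d A i + m)) :
    P.real {γ | partialMatching A i γ 0 = 0 ∧ IsRun γ m s} = (1 / 2) ^ m * unmatchedProb P A i := by
  conv_rhs => rw [← card_window hd m s]
  refine measureReal_and_forall_mem_eq_true hP (p := fun γ => partialMatching A i γ 0 = 0)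
    (window m s) fun x hx γ => ?_
  have hfar : x ∉ box d (localRadius d A i) := fun hbox => hs <| by
    simpa using add_mem_box hbox (neg_mem_box.2 (sub_mem_box_of_mem_window hx))
  have hlike : LooksAlike γ (flipAt x γ) 0 0 (localRadius d A i) := fun y hy => by
    rw [sub_zero] at hy
    rw [add_zero, flipAt_apply_of_ne (ne_of_mem_of_not_mem hy hfar)]
  have hcongr := partialMatching_congr hlike
  rw [add_zero, add_zero] at hcongr
  rw [hcongr]

theorem sum_measureReal_unmatched_and_isRun_le (hP : IsBernoulliHalfProduct P) (hd : 1 ≤ d)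
    (A i m : ℕ) (G : Finset (Site d)) :
    ∑ s ∈ G, P.real {γ | partialMatching A i γ 0 = 0 ∧ IsRun γ m s} ≤
      (1 / 2) ^ m * (G.card * unmatchedProb P A i + (2 * (localRadius d A i + m) + 1) ^ d) := by
  classical
  have := hP.1
  set B := box d (localRadius d A i + m)
  have hfar : ∑ s ∈ G \ B, P.real {γ | partialMatching A i γ 0 = 0 ∧ IsRun γ m s} ≤
      (1 / 2) ^ m * (G.card * unmatchedProb P A i) := by
    rw [Finset.sum_congr rfl fun s hs =>
      measureReal_unmatched_and_isRun hP hd (Finset.mem_sdiff.1 hs).2, Finset.sum_const,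
      nsmul_eq_mul, mul_left_comm]
    have hnonneg : 0 ≤ unmatchedProb P A i := measureReal_nonneg
    gcongr
    exact Finset.sdiff_subset
  have hnear : ∑ s ∈ G ∩ B, P.real {γ | partialMatching A i γ 0 = 0 ∧ IsRun γ m s} ≤
      (1 / 2) ^ m * (2 * (localRadius d A i + m) + 1) ^ d := by
    have hterm (s : Site d) :
        P.real {γ | partialMatching A i γ 0 = 0 ∧ IsRun γ m s} ≤ (1 / 2) ^ m :=
      (measureReal_mono fun γ h => h.2).trans_eq (measureReal_isRun hP hd m s)
    refine (Finset.sum_le_card_nsmul _ _ _ fun s _ => hterm s).trans ?_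
    rw [nsmul_eq_mul, mul_comm]
    gcongr
    exact_mod_cast (Finset.card_le_card Finset.inter_subset_right).trans_eq (card_box d _)
  rw [← Finset.sum_inter_add_sum_sdiff G B, mul_add, add_comm]
  exact add_le_add hfar hnear

/-- The stages `i + 1` before stage `j + 1` whose level is smaller than that of stage `j + 1`. The
matching built by them does not depend on the runs that stage `j + 1` uses as centers, except near
those runs. -/
def lowerStages (A j : ℕ) : Finset ℕ :=
  (Finset.range j).filter fun i => level A (i + 1) < level A (j + 1)

theorem measureReal_isCut_le (hP : IsBernoulliHalfProduct P) (hd : 1 ≤ d) {A : ℕ} (hA : 0 < A)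
    {j m R : ℕ} (hm : runLength d A (level A (j + 1)) = m) (hR : radius A (level A (j + 1)) = R) :
    P.real {γ | (∃ s, IsCenter γ m R 0 s) ∧
        IsCut γ (partialMatching A j γ) m R (2 ^ (j + 1)) 0} ≤
      ∑ i ∈ lowerStages A j, (1 / 2) ^ m *
        ((nearGrid d R (2 ^ (j + 1)) (2 ^ (i + 1))).card * unmatchedProb P A i +
          (2 * (localRadius d A i + m) + 1) ^ d) := by
  have := hP.1
  have hsub : {γ | (∃ s, IsCenter γ m R 0 s) ∧
      IsCut γ (partialMatching A j γ) m R (2 ^ (j + 1)) 0} ⊆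
        ⋃ i ∈ lowerStages A j, ⋃ s ∈ nearGrid d R (2 ^ (j + 1)) (2 ^ (i + 1)),
          {γ | partialMatching A i γ 0 = 0 ∧ IsRun γ m s} := by
    rintro γ ⟨⟨s, hs⟩, hcut⟩
    subst hm hR
    obtain ⟨i, hij, hlevel, hi, s', hs', hrun⟩ := exists_isRun_of_pair_cut hA hs hcut
    simp only [Set.mem_iUnion, lowerStages, Finset.mem_filter, Finset.mem_range]
    exact ⟨i, ⟨hij, hlevel⟩, s', hs', hi, hrun⟩
  calc _ ≤ _ := measureReal_mono hsub (measure_ne_top P _)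
    _ ≤ _ := measureReal_biUnion_finset_le _ _
    _ ≤ _ := Finset.sum_le_sum fun i _ => (measureReal_biUnion_finset_le _ _).trans
      (sum_measureReal_unmatched_and_isRun_le hP hd A i m _)

end CutProbability

section Scale

/-- The order of magnitude of the expected number of centers within reach of a site at level `n`. -/
def scale (n : ℕ) : ℝ := 2 ^ 2 ^ n

theorem one_le_scale (n : ℕ) : 1 ≤ scale n := one_le_pow₀ one_le_two

variable {A : ℕ}

theorem half_pow_runLength_mul_radius_pow (hd : 1 ≤ d) (hA : 0 < A) (n : ℕ) :
    (1 / 2) ^ runLength d A n * (radius A n : ℝ) ^ d = scale n := by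
  have hexp : A * 2 ^ n * d = runLength d A n + 2 ^ n := by
    rw [runLength, ← Nat.succ_mul, Nat.succ_eq_add_one, Nat.sub_add_cancel (Nat.mul_pos hd hA)]
    ring
  rw [radius, Nat.cast_pow, ← pow_mul, hexp, pow_add, ← mul_assoc, Nat.cast_ofNat, ← mul_pow,
    one_div_mul_cancel two_ne_zero, one_pow, one_mul, scale]

theorem runLength_pos (hd : 2 ≤ d) (hA : 0 < A) (n : ℕ) : 0 < runLength d A n :=
  Nat.mul_pos (Nat.sub_pos_of_lt (hd.trans (Nat.le_mul_of_pos_right d hA))) (Nat.two_pow_pos n)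

theorem exists_mul_two_pow_pow_le_scale (C : ℝ) (k : ℕ) :
    ∃ K, 1 ≤ K ∧ ∀ n : ℕ, (C * 2 ^ n) ^ k ≤ K * scale n := by
  obtain ⟨K, hK⟩ :=
    (tendsto_pow_const_div_const_pow_of_one_lt k (one_lt_two (α := ℝ))).bddAbove_range
  refine ⟨max 1 (|C| ^ k * K), le_max_left _ _, fun n => ?_⟩
  have hn : ((2 : ℝ) ^ n) ^ k ≤ K * scale n := by
    have := hK ⟨2 ^ n, rfl⟩
    rw [div_le_iff₀ (by positivity)] at this
    rw [scale]
    exact_mod_cast this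
  calc (C * 2 ^ n) ^ k ≤ |C| ^ k * (2 ^ n) ^ k := by
        rw [mul_pow, ← abs_pow]
        gcongr
        exact le_abs_self _
    _ ≤ |C| ^ k * K * scale n := by
        rw [mul_assoc]
        gcongr
    _ ≤ _ := by
        have := one_le_scale n
        gcongr
        exact le_max_right _ _

theorem exists_runLength_polynomials_le_scale (hd : 1 ≤ d) (hA : 0 < A) :
    ∃ K, 1 ≤ K ∧ ∀ n, (runLength d A n : ℝ) ^ (A + 1) ≤ K * scale n ∧
      (6 * runLength d A n + 1 : ℝ) ^ d ≤ K * scale n ∧ 2 * runLength d A n ≤ K * scale n ∧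
      (A * 2 ^ n : ℝ) * (2 * (A * 2 ^ n) * (3 + runLength d A n) + 2 * runLength d A n + 1) ^ d ≤
        K * scale n := by
  obtain ⟨K, hK, hpoly⟩ := exists_mul_two_pow_pow_le_scale (11 * (d * A)) (2 * d + 1 + A)
  refine ⟨K, hK, fun n => ?_⟩
  set m : ℝ := (runLength d A n : ℝ)
  set a : ℝ := A * 2 ^ n
  set M : ℝ := d * a
  have hd1 : (1 : ℝ) ≤ d := by exact_mod_cast hd
  have ha : 1 ≤ a :=
    one_le_mul_of_one_le_of_one_le (by exact_mod_cast hA) (one_le_pow₀ one_le_two)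
  have haM : a ≤ M := le_mul_of_one_le_left (by positivity) hd1
  have _ : 0 ≤ m := Nat.cast_nonneg _
  have hmM : m ≤ M := by
    have : runLength d A n ≤ d * A * 2 ^ n := Nat.mul_le_mul_right (2 ^ n) (Nat.sub_le (d * A) 1)
    simp only [m, M, a, ← mul_assoc]
    exact_mod_cast this
  have hle {k : ℕ} (hk : k ≤ 2 * d + 1 + A) : (11 * M) ^ k ≤ K * scale n := by
    refine (pow_le_pow_right₀ (by linarith) hk).trans ?_
    simpa only [M, a, mul_assoc] using hpoly n
  refine ⟨?_, ?_, ?_, ?_⟩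
  · refine le_trans ?_ (hle (k := A + 1) (by omega))
    gcongr
    linarith
  · refine le_trans ?_ (hle (k := d) (by omega))
    gcongr
    linarith
  · refine le_trans ?_ (hle (k := 1) (by omega))
    linarith
  · refine le_trans ?_ (hle (k := 2 * d + 1) (by omega))
    rw [pow_succ', pow_mul]
    gcongr
    · linarith
    · nlinarith

end Scale

section Recursion

variable {P : Measure (Config d)} {A : ℕ}

theorem two_pow_mul_exp_neg_le (hd : 2 ≤ d) (hA : 0 < A) {K : ℝ} {n : ℕ}
    (hK : (runLength d A n : ℝ) ^ (A + 1) ≤ K * scale n) {J : ℕ} (hJ : J ≤ A * 2 ^ n) :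
    2 ^ J * Real.exp (-(scale n / runLength d A n)) ≤ (A + 1).factorial * K := by
  have hm : (0 : ℝ) < runLength d A n := by exact_mod_cast runLength_pos hd hA n
  have hw := zero_lt_one.trans_le (one_le_scale n)
  set m : ℝ := (runLength d A n : ℝ)
  have hJw : (2 : ℝ) ^ J ≤ scale n ^ A := by
    rw [scale, ← pow_mul, mul_comm]
    exact pow_le_pow_right₀ one_le_two hJ
  have hexp : (scale n / m) ^ (A + 1) ≤ (A + 1).factorial * Real.exp (scale n / m) := by
    have := Real.pow_div_factorial_le_exp (scale n / m) (by positivity) (A + 1)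
    rwa [div_le_iff₀' (by positivity)] at this
  have hKw : 0 ≤ K * scale n := (by positivity : 0 ≤ m ^ (A + 1)).trans hK
  have _ : (0 : ℝ) < (A + 1).factorial := by positivity
  rw [Real.exp_neg, ← div_eq_mul_inv, div_le_iff₀ (Real.exp_pos _)]
  refine hJw.trans (le_of_mul_le_mul_right ?_ hw)
  calc scale n ^ A * scale n = m ^ (A + 1) * (scale n / m) ^ (A + 1) := by
        rw [div_pow, mul_div_cancel₀ _ (by positivity), pow_succ]
    _ ≤ (K * scale n) * ((A + 1).factorial * Real.exp (scale n / m)) := by gcongr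
    _ = _ := by ring

theorem integral_abs_excess_gridBlock_le (hP : IsBernoulliHalfProduct P) (hd : 2 ≤ d) (m R : ℕ)
    {q : ℕ} (hq : 0 < q) (v : Site d) :
    ∫ γ, |(excess γ m R (gridBlock R q v) : ℝ)| ∂P ≤
      (1 / 2) ^ m * q ^ (d - 1) * (2 + (6 * m + 1) ^ d + 2 * m * ((1 / 2) ^ m * q ^ d)) := by
  have hq1 : (1 : ℝ) ≤ q := by exact_mod_cast hq
  have hcard : ((gridBlock R q v).card : ℝ) ≤ q ^ d := by exact_mod_cast card_gridBlock_le R hq v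
  have hroot : (q : ℝ) ≤ q ^ (d - 1) := le_self_pow₀ hq1 (by omega)
  have hpow : (q : ℝ) ^ d = q ^ (d - 1) * q := by rw [← pow_succ, Nat.sub_add_cancel (by omega)]
  have hT : (0 : ℝ) < q ^ (d - 1) := by positivity
  refine (integral_abs_excess_le hP (by omega) m R (gridBlock R q v) hT).trans ?_
  set G : ℝ := ((gridBlock R q v).card : ℝ)
  calc _ ≤ (q : ℝ) ^ (d - 1) * (1 / 2) ^ m + (q ^ d * (1 / 2) ^ m +
        (6 * m + 1) ^ d * q ^ d * (1 / 2) ^ m + q ^ d * q ^ d * (2 * m * (1 / 2) ^ (2 * m))) /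
          q ^ (d - 1) := by gcongr
    _ = (1 / 2) ^ m * q ^ (d - 1) + (1 / 2) ^ m * q *
        (1 + (6 * m + 1) ^ d + 2 * m * ((1 / 2) ^ m * q ^ d)) := by
      rw [hpow]
      field_simp
      ring
    _ ≤ (1 / 2) ^ m * q ^ (d - 1) + (1 / 2) ^ m * q ^ (d - 1) *
        (1 + (6 * m + 1) ^ d + 2 * m * ((1 / 2) ^ m * q ^ d)) := by gcongr
    _ = _ := by ring

theorem two_pow_mul_sum_integral_abs_excess_le (hP : IsBernoulliHalfProduct P) (hd : 2 ≤ d)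
    (hA : 0 < A) {n J : ℕ} (hJ : J ≤ A * 2 ^ n) :
    2 ^ J * ∑ v ∈ (box d (radius A n)).image (gridIndex (2 ^ J)),
        ∫ γ, |(excess γ (runLength d A n) (radius A n) (gridBlock (radius A n) (2 ^ J) v) : ℝ)| ∂P ≤
      3 ^ d * scale n * (2 + (6 * runLength d A n + 1) ^ d + 2 * runLength d A n * scale n) := by
  set m := runLength d A n
  set q := 2 ^ J with hq
  set c := 2 ^ (A * 2 ^ n - J)
  have hR : radius A n = c * q := by rw [radius, ← pow_add, Nat.sub_add_cancel hJ]
  have hw : (1 / 2) ^ m * (radius A n : ℝ) ^ d = scale n :=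
    half_pow_runLength_mul_radius_pow (by omega) hA n
  have hqR : (q : ℝ) ≤ radius A n := by
    exact_mod_cast hR ▸ Nat.le_mul_of_pos_left q (Nat.two_pow_pos _)
  have hcard : (((box d (radius A n)).image (gridIndex q)).card : ℝ) ≤ (3 * c) ^ d := by
    rw [hR]
    exact_mod_cast card_image_gridIndex_le (Nat.two_pow_pos _) (Nat.two_pow_pos _)
  have hterm (v : Site d) : ∫ γ, |(excess γ m (radius A n) (gridBlock (radius A n) q v) : ℝ)| ∂P ≤
      (1 / 2) ^ m * q ^ (d - 1) * (2 + (6 * m + 1) ^ d + 2 * m * scale n) := by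
    refine (integral_abs_excess_gridBlock_le hP hd m _ (Nat.two_pow_pos J) v).trans ?_
    rw [← hw]
    gcongr
  have hw0 := zero_le_one.trans (one_le_scale n)
  have hqpow : (2 : ℝ) ^ J = q := by rw [hq]; norm_cast
  calc _ ≤ (q : ℝ) * ((3 * c) ^ d *
        ((1 / 2) ^ m * q ^ (d - 1) * (2 + (6 * m + 1) ^ d + 2 * m * scale n))) := by
        rw [hqpow]
        refine mul_le_mul_of_nonneg_left ?_ (Nat.cast_nonneg q)
        refine (Finset.sum_le_card_nsmul _ _ _ fun v _ => hterm v).trans ?_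
        rw [nsmul_eq_mul]
        gcongr
    _ = 3 ^ d * ((1 / 2) ^ m * (c ^ d * (q * q ^ (d - 1)))) *
        (2 + (6 * m + 1) ^ d + 2 * m * scale n) := by
        rw [mul_pow]
        ring
    _ = _ := by
        rw [mul_pow_sub_one (by omega), ← mul_pow, ← Nat.cast_mul, ← hR, hw]

theorem localRadius_le (hA : 0 < A) {n j : ℕ} (hj : j ≤ A * 2 ^ n) :
    localRadius d A j ≤ j * (3 * radius A n + runLength d A n) := by
  induction j with
  | zero => exact Nat.zero_le _
  | succ j ih =>
    have hlevel := (level_le_iff hA).2 hj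
    have hradius : radius A (level A (j + 1)) ≤ radius A n := by
      unfold radius
      gcongr <;> norm_num
    have hlength : runLength d A (level A (j + 1)) ≤ runLength d A n := by
      unfold runLength
      gcongr
      norm_num
    rw [localRadius, add_one_mul]
    exact add_le_add (ih (by omega)) (by omega)

theorem two_pow_mul_localRadius_pow_le (hd : 2 ≤ d) (hA : 0 < A) {n i J : ℕ}
    (hi : i ≤ A * 2 ^ n) (hJ : J ≤ A * 2 ^ (n + 1)) :
    2 ^ J * (2 * (localRadius d A i + runLength d A (n + 1)) + 1) ^ d ≤
      (2 * (A * 2 ^ (n + 1)) * (3 + runLength d A (n + 1)) + 2 * runLength d A (n + 1) + 1) ^ d *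
        radius A (n + 1) ^ d := by
  set a := A * 2 ^ (n + 1)
  set m := runLength d A (n + 1)
  have hsquare : radius A (n + 1) = radius A n * radius A n := by
    rw [radius, radius, ← pow_add]
    ring_nf
  have hpos : 0 < radius A n := Nat.two_pow_pos _
  have hlocal : localRadius d A i ≤ a * ((3 + m) * radius A n) := by
    refine (localRadius_le hA hi).trans (Nat.mul_le_mul (hi.trans ?_) ?_)
    · exact Nat.mul_le_mul_left A (Nat.pow_le_pow_right two_pos (Nat.le_succ n))
    · have hm : runLength d A n ≤ m :=
        Nat.mul_le_mul_left _ (Nat.pow_le_pow_right two_pos (Nat.le_succ n))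
      nlinarith
  have hstage : 2 ^ J ≤ radius A n ^ d :=
    calc 2 ^ J ≤ 2 ^ a := Nat.pow_le_pow_right two_pos hJ
      _ = radius A n ^ 2 := by rw [sq, ← hsquare, radius]
      _ ≤ radius A n ^ d := Nat.pow_le_pow_right hpos hd
  have hbase : 2 * (localRadius d A i + m) + 1 ≤ (2 * a * (3 + m) + 2 * m + 1) * radius A n := by
    nlinarith
  calc _ ≤ radius A n ^ d * ((2 * a * (3 + m) + 2 * m + 1) * radius A n) ^ d := by gcongr
    _ = _ := by
      rw [hsquare, mul_pow, mul_pow]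
      ring

theorem two_pow_mul_half_pow_mul_card_nearGrid_le (hd : 1 ≤ d) (hA : 0 < A) {n i j : ℕ}
    (hij : i < j) (hj : j ≤ A * 2 ^ n) :
    2 ^ j * ((1 / 2) ^ runLength d A n * ((nearGrid d (radius A n) (2 ^ j) (2 ^ i)).card : ℝ)) ≤
      3 * d * 5 ^ d * scale n * 2 ^ i := by
  have hR : radius A n = 2 ^ (A * 2 ^ n - j) * 2 ^ j := by
    rw [radius, ← pow_add, Nat.sub_add_cancel hj]
  have hmesh : 2 * 2 ^ i ≤ 2 ^ j := by
    rw [← pow_succ']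
    exact Nat.pow_le_pow_right two_pos hij
  have hcard := card_nearGrid_mul_le (d := d) (Nat.two_pow_pos (A * 2 ^ n - j))
    (Nat.two_pow_pos i) hmesh
  rw [← hR] at hcard
  rify at hcard
  calc _ = (1 / 2) ^ runLength d A n *
        ((nearGrid d (radius A n) (2 ^ j) (2 ^ i)).card * 2 ^ j : ℝ) := by ring
    _ ≤ (1 / 2) ^ runLength d A n * (3 * d * 2 ^ i * (5 * radius A n) ^ d) := by gcongr
    _ = 3 * d * 5 ^ d * ((1 / 2) ^ runLength d A n * radius A n ^ d) * 2 ^ i := by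
      rw [mul_pow]
      ring
    _ = _ := by rw [half_pow_runLength_mul_radius_pow hd hA]

theorem two_pow_mul_half_pow_mul_localRadius_pow_le (hd : 2 ≤ d) (hA : 0 < A) {n i J : ℕ}
    (hi : level A i < n) (hJ : J ≤ A * 2 ^ n) :
    2 ^ J * ((1 / 2) ^ runLength d A n * (2 * (localRadius d A i + runLength d A n) + 1 : ℝ) ^ d) ≤
      (2 * (A * 2 ^ n) * (3 + runLength d A n) + 2 * runLength d A n + 1) ^ d * scale n := by
  obtain ⟨n, rfl⟩ := Nat.exists_eq_succ_of_ne_zero (Nat.ne_zero_of_lt hi)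
  have hbound :=
    two_pow_mul_localRadius_pow_le hd hA ((level_le_iff hA).1 (Nat.le_of_lt_succ hi)) hJ
  rify at hbound
  rw [← half_pow_runLength_mul_radius_pow (one_le_two.trans hd) hA, mul_left_comm,
    mul_left_comm (_ ^ d)]
  exact mul_le_mul_of_nonneg_left hbound (by positivity)

theorem two_pow_mul_cut_term_le (hd : 2 ≤ d) (hA : 0 < A) {i j n : ℕ}
    (hn : level A (j + 1) = n) (hi : i ∈ lowerStages A j) :
    2 ^ (j + 1) * ((1 / 2) ^ runLength d A n *
      ((nearGrid d (radius A n) (2 ^ (j + 1)) (2 ^ (i + 1))).card * unmatchedProb P A i +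
        (2 * (localRadius d A i + runLength d A n) + 1) ^ d)) ≤
      3 * d * 5 ^ d * scale n * (2 ^ (i + 1) * unmatchedProb P A i) +
        (2 * (A * 2 ^ n) * (3 + runLength d A n) + 2 * runLength d A n + 1) ^ d * scale n := by
  obtain ⟨hij, hlevel⟩ := Finset.mem_filter.1 hi
  rw [hn] at hlevel
  have hj : j + 1 ≤ A * 2 ^ n := hn ▸ le_mul_two_pow_level hA (j + 1)
  have hcard := two_pow_mul_half_pow_mul_card_nearGrid_le (one_le_two.trans hd) hA
    (Nat.add_lt_add_right (Finset.mem_range.1 hij) 1) hj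
  have hlocal := two_pow_mul_half_pow_mul_localRadius_pow_le hd hA
    ((level_mono hA (Nat.le_succ i)).trans_lt hlevel) hj
  have hprob : 0 ≤ unmatchedProb P A i := measureReal_nonneg
  calc _ = 2 ^ (j + 1) * ((1 / 2) ^ runLength d A n *
          ((nearGrid d (radius A n) (2 ^ (j + 1)) (2 ^ (i + 1))).card : ℝ)) * unmatchedProb P A i +
        2 ^ (j + 1) * ((1 / 2) ^ runLength d A n *
          (2 * (localRadius d A i + runLength d A n) + 1 : ℝ) ^ d) := by ring
    _ ≤ _ := add_le_add (mul_le_mul_of_nonneg_right hcard hprob) hlocal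
    _ = _ := by ring

theorem two_pow_mul_measureReal_isCut_le (hP : IsBernoulliHalfProduct P) (hd : 2 ≤ d) (hA : 0 < A)
    {j n : ℕ} (hn : level A (j + 1) = n) :
    2 ^ (j + 1) * P.real {γ | (∃ s, IsCenter γ (runLength d A n) (radius A n) 0 s) ∧
        IsCut γ (partialMatching A j γ) (runLength d A n) (radius A n) (2 ^ (j + 1)) 0} ≤
      3 * d * 5 ^ d * scale n * ∑ i ∈ lowerStages A j, 2 ^ (i + 1) * unmatchedProb P A i +
        A * 2 ^ n * (2 * (A * 2 ^ n) * (3 + runLength d A n) + 2 * runLength d A n + 1) ^ d *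
          scale n := by
  have hcut := measureReal_isCut_le hP (one_le_two.trans hd) hA (j := j) (by rw [hn]) (by rw [hn])
  set L : ℝ := (2 * (A * 2 ^ n) * (3 + runLength d A n) + 2 * runLength d A n + 1) ^ d
  have hw := one_le_scale n
  have hcount : ((lowerStages A j).card : ℝ) ≤ A * 2 ^ n := by
    have hcard : (lowerStages A j).card ≤ j :=
      (Finset.card_filter_le _ _).trans_eq (Finset.card_range j)
    have hj : j + 1 ≤ A * 2 ^ n := hn ▸ le_mul_two_pow_level hA (j + 1)
    exact_mod_cast hcard.trans (Nat.le_of_succ_le hj)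
  calc _ ≤ 2 ^ (j + 1) * _ := mul_le_mul_of_nonneg_left hcut (by positivity)
    _ ≤ _ := (Finset.mul_sum _ _ _).trans_le
      (Finset.sum_le_sum fun i hi => two_pow_mul_cut_term_le hd hA hn hi)
    _ = 3 * d * 5 ^ d * scale n * ∑ i ∈ lowerStages A j, 2 ^ (i + 1) * unmatchedProb P A i +
        (lowerStages A j).card * L * scale n := by
      rw [Finset.sum_add_distrib, ← Finset.mul_sum, Finset.sum_const, nsmul_eq_mul, mul_assoc _ L]
    _ ≤ _ := by gcongr

theorem sum_bounds_le_mul_pow_three {a b c K w S : ℝ} (ha : 0 ≤ a) (hb : 0 ≤ b) (hc : 0 ≤ c)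
    (hK : 0 ≤ K) (hw : 1 ≤ w) (hS : 0 ≤ S) :
    a + b * w * (2 + K * w + K * w * w) + (c * w * S + K * w * w) ≤
      (a + b * (2 + 2 * K) + c + K) * w ^ 3 * (1 + S) := by
  have hw1 : w ≤ w ^ 3 := le_self_pow₀ hw three_ne_zero
  have hw2 : w ^ 2 ≤ w ^ 3 := pow_le_pow_right₀ hw (by norm_num)
  calc _ = a * 1 + b * (2 * w + K * w ^ 2 + K * w ^ 3) + (c * w * S + K * w ^ 2) := by ring
    _ ≤ a * w ^ 3 + b * (2 * w ^ 3 + K * w ^ 3 + K * w ^ 3) + (c * w ^ 3 * S + K * w ^ 3) := by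
      gcongr
      exact hw.trans hw1
    _ ≤ _ := by
      have : 0 ≤ (a + b * (2 + 2 * K) + K) * w ^ 3 * S + c * w ^ 3 := by positivity
      linarith

theorem exists_two_pow_mul_unmatchedProb_succ_le (hP : IsBernoulliHalfProduct P) (hd : 2 ≤ d)
    (hA : 0 < A) : ∃ K, 1 ≤ K ∧ ∀ j, 2 ^ (j + 1) * unmatchedProb P A (j + 1) ≤
      K * scale (level A (j + 1)) ^ 3 *
        (1 + ∑ i ∈ lowerStages A j, 2 ^ (i + 1) * unmatchedProb P A i) := by
  obtain ⟨K, hK, hpoly⟩ := exists_runLength_polynomials_le_scale (by omega : 1 ≤ d) hA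
  refine ⟨(A + 1).factorial * K + 3 ^ d * (2 + 2 * K) + 3 * d * 5 ^ d + K, ?_, fun j => ?_⟩
  · have : 0 ≤ (A + 1).factorial * K + 3 ^ d * (2 + 2 * K) + 3 * d * 5 ^ d := by positivity
    linarith
  obtain ⟨n, hn⟩ : ∃ n, level A (j + 1) = n := ⟨_, rfl⟩
  have hj : j + 1 ≤ A * 2 ^ n := hn ▸ le_mul_two_pow_level hA (j + 1)
  obtain ⟨hexp, hmixed, hlength, hlocal⟩ := hpoly n
  have hsucc := unmatchedProb_succ_le_add hP (A := A) (j := j) (by rw [hn]) (by rw [hn]) rfl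
  have hcenter := (measureReal_not_exists_isCenter_le hP (by omega) (runLength_pos hd hA n)
    (radius A n)).trans_eq (by rw [half_pow_runLength_mul_radius_pow (by omega) hA])
  replace hcenter := (mul_le_mul_of_nonneg_left hcenter (by positivity)).trans
    (two_pow_mul_exp_neg_le hd hA hexp hj)
  have hexcess := two_pow_mul_sum_integral_abs_excess_le hP hd hA hj
  have hcut := two_pow_mul_measureReal_isCut_le hP hd hA hn
  rw [hn]
  set m := runLength d A n
  have hw := one_le_scale n
  set w := scale n
  set S := ∑ i ∈ lowerStages A j, 2 ^ (i + 1) * unmatchedProb P A i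
  have hS : 0 ≤ S := Finset.sum_nonneg fun i _ => mul_nonneg (by positivity) measureReal_nonneg
  calc _ ≤ 2 ^ (j + 1) * _ := mul_le_mul_of_nonneg_left hsucc (by positivity)
    _ ≤ (A + 1).factorial * K + 3 ^ d * w * (2 + (6 * m + 1) ^ d + 2 * m * w) +
        (3 * d * 5 ^ d * w * S + A * 2 ^ n * (2 * (A * 2 ^ n) * (3 + m) + 2 * m + 1) ^ d * w) := by
      rw [mul_add, mul_add]
      exact add_le_add (add_le_add hcenter hexcess) hcut
    _ ≤ (A + 1).factorial * K + 3 ^ d * w * (2 + K * w + K * w * w) +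
        (3 * d * 5 ^ d * w * S + K * w * w) := by gcongr
    _ ≤ _ := sum_bounds_le_mul_pow_three (by positivity) (by positivity) (by positivity)
      (by positivity) hw hS

end Recursion

section Decay

theorem scale_succ (n : ℕ) : scale (n + 1) = scale n ^ 2 := by
  rw [scale, scale, ← pow_mul, pow_succ]

theorem scale_mono : Monotone scale := fun _ _ h =>
  pow_le_pow_right₀ one_le_two (Nat.pow_le_pow_right two_pos h)

theorem le_scale (n : ℕ) : (n : ℝ) ≤ scale n := by
  rw [scale]
  exact_mod_cast Nat.lt_two_pow_self.le.trans Nat.lt_two_pow_self.le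

variable {A : ℕ} {u : ℕ → ℝ} {C K : ℝ}

-- Since `scale` squares from one level to the next, stages of lower level contribute only the
-- square root of `scale n ^ 10`. This gain pays for the factors `scale n ^ 3` and `2 ^ n` of the
-- recursion.
theorem scale_pow_level_le_of_mem_lowerStages (hA : 0 < A) {i j n : ℕ}
    (hn : level A (j + 1) = n) (hi : i ∈ lowerStages A j) :
    scale (level A i) ^ 10 ≤ scale n ^ 5 := by
  have hlt : level A i < n := (level_mono hA (Nat.le_succ i)).trans_lt
    (hn ▸ (Finset.mem_filter.1 hi).2)
  obtain ⟨n, rfl⟩ := Nat.exists_eq_succ_of_ne_zero (Nat.ne_zero_of_lt hlt)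
  rw [Nat.succ_eq_add_one, scale_succ, ← pow_mul]
  exact pow_le_pow_left₀ (zero_le_one.trans (one_le_scale _))
    (scale_mono (Nat.le_of_lt_succ hlt)) 10

theorem one_add_sum_lowerStages_le (hA : 0 < A) (hC : 1 ≤ C) {j n : ℕ}
    (hn : level A (j + 1) = n) (hu : ∀ i < j, 2 ^ i * u i ≤ C * scale (level A i) ^ 10) :
    1 + ∑ i ∈ lowerStages A j, 2 ^ (i + 1) * u i ≤ 3 * A * 2 ^ n * (C * scale n ^ 5) := by
  have hj : (j : ℝ) + 1 ≤ A * 2 ^ n := by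
    exact_mod_cast hn ▸ le_mul_two_pow_level hA (j + 1)
  have hterm (i : ℕ) (hi : i ∈ lowerStages A j) : 2 ^ (i + 1) * u i ≤ 2 * (C * scale n ^ 5) := by
    have hsqrt := scale_pow_level_le_of_mem_lowerStages hA hn hi
    calc 2 ^ (i + 1) * u i = 2 * (2 ^ i * u i) := by ring
      _ ≤ 2 * (C * scale (level A i) ^ 10) :=
        mul_le_mul_of_nonneg_left (hu i (Finset.mem_range.1 (Finset.mem_filter.1 hi).1)) zero_le_two
      _ ≤ _ := by gcongr
  have hw : 1 ≤ C * scale n ^ 5 :=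
    one_le_mul_of_one_le_of_one_le hC (one_le_pow₀ (one_le_scale n))
  have hcard : ((lowerStages A j).card : ℝ) ≤ j := by
    exact_mod_cast (Finset.card_filter_le _ _).trans_eq (Finset.card_range j)
  calc _ ≤ 1 + (lowerStages A j).card * (2 * (C * scale n ^ 5)) := by
        grw [Finset.sum_le_card_nsmul _ _ _ hterm, nsmul_eq_mul]
    _ ≤ C * scale n ^ 5 + j * (2 * (C * scale n ^ 5)) := by gcongr
    _ ≤ 3 * (j + 1) * (C * scale n ^ 5) := by nlinarith
    _ ≤ _ := by
      rw [mul_assoc 3 (A : ℝ)]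
      gcongr

theorem exists_two_pow_mul_le_scale_pow (hA : 0 < A) (hK : 1 ≤ K) (hu0 : ∀ j, 0 ≤ u j)
    (hu1 : ∀ j, u j ≤ 1) (hrec : ∀ j, 2 ^ (j + 1) * u (j + 1) ≤
      K * scale (level A (j + 1)) ^ 3 * (1 + ∑ i ∈ lowerStages A j, 2 ^ (i + 1) * u i)) :
    ∃ C, 1 ≤ C ∧ ∀ j, 2 ^ j * u j ≤ C * scale (level A j) ^ 10 := by
  obtain ⟨L, _, hstages⟩ := exists_mul_two_pow_pow_le_scale (3 * A) 1
  obtain ⟨N, hN⟩ := exists_nat_ge (K * L)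
  have hC : (1 : ℝ) ≤ 2 ^ (A * 2 ^ N) := one_le_pow₀ one_le_two
  refine ⟨2 ^ (A * 2 ^ N), hC, fun j => ?_⟩
  induction j using Nat.strong_induction_on with | _ j ih
  by_cases hlevel : level A j ≤ N
  · have hj : (2 : ℝ) ^ j ≤ 2 ^ (A * 2 ^ N) :=
      pow_le_pow_right₀ one_le_two ((level_le_iff hA).1 hlevel)
    calc 2 ^ j * u j ≤ 2 ^ (A * 2 ^ N) * 1 := mul_le_mul hj (hu1 j) (hu0 j) (by positivity)
      _ ≤ _ := by
        gcongr
        exact one_le_pow₀ (one_le_scale _)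
  obtain _ | j := j
  · exact absurd ((level_le_iff hA).2 (Nat.zero_le _)) hlevel
  obtain ⟨n, hn⟩ : ∃ n, level A (j + 1) = n := ⟨_, rfl⟩
  have hKw : K * L ≤ scale n :=
    hN.trans ((le_scale N).trans (scale_mono (hn ▸ (not_le.1 hlevel).le)))
  have hw := zero_le_one.trans (one_le_scale n)
  have hsum := one_add_sum_lowerStages_le hA hC hn fun i hi => ih i (by omega)
  have hpoly := hstages n
  rw [pow_one] at hpoly
  set C : ℝ := 2 ^ (A * 2 ^ N)
  calc 2 ^ (j + 1) * u (j + 1)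
      ≤ K * scale n ^ 3 * (1 + ∑ i ∈ lowerStages A j, 2 ^ (i + 1) * u i) := hn ▸ hrec j
    _ ≤ K * scale n ^ 3 * (L * scale n * (C * scale n ^ 5)) := by
      gcongr
      exact hsum.trans (by gcongr)
    _ = K * L * (C * scale n ^ 9) := by ring
    _ ≤ scale n * (C * scale n ^ 9) := by gcongr
    _ = _ := by rw [hn]; ring

theorem scale_level_le (hA : 0 < A) (j : ℕ) : scale (level A j) ≤ 2 ^ (1 + 2 * j / A : ℝ) := by
  have hA' : (0 : ℝ) < A := by exact_mod_cast hA
  have hexp : (2 ^ level A j : ℝ) ≤ 1 + 2 * j / A := by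
    obtain hzero | hpos := Nat.eq_zero_or_pos (level A j)
    · rw [hzero, pow_zero]
      exact le_add_of_nonneg_right (by positivity)
    · have hlt : A * 2 ^ (level A j - 1) < j := by
        rw [← not_le, ← level_le_iff hA]
        omega
      have hdouble : A * 2 ^ level A j < 2 * j := by
        rw [← mul_pow_sub_one hpos.ne' 2, mul_left_comm]
        omega
      refine le_add_of_nonneg_of_le zero_le_one ((le_div_iff₀' hA').2 ?_)
      exact_mod_cast hdouble.le
  rw [scale, ← Real.rpow_natCast]
  exact Real.rpow_le_rpow_of_exponent_le one_le_two (by exact_mod_cast hexp)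

variable {P : Measure (Config d)}

theorem exists_unmatchedProb_le (hP : IsBernoulliHalfProduct P) (hd : 2 ≤ d) (hA : 0 < A) :
    ∃ C, ∀ j, unmatchedProb P A j ≤ C * 2 ^ (-(1 - 20 / A) * j : ℝ) := by
  have := hP.1
  obtain ⟨K, hK, hrec⟩ := exists_two_pow_mul_unmatchedProb_succ_le hP hd hA
  obtain ⟨C, hC, hbound⟩ := exists_two_pow_mul_le_scale_pow (u := unmatchedProb P A) hA hK
    (fun _ => measureReal_nonneg) (fun _ => measureReal_le_one) hrec
  refine ⟨C * 2 ^ 10, fun j => le_of_mul_le_mul_left ?_ (by positivity : (0 : ℝ) < 2 ^ j)⟩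
  have hw := zero_le_one.trans (one_le_scale (level A j))
  calc 2 ^ j * unmatchedProb P A j ≤ C * scale (level A j) ^ 10 := hbound j
    _ ≤ C * (2 ^ (1 + 2 * j / A : ℝ)) ^ 10 := by
      gcongr
      exact scale_level_le hA j
    _ = 2 ^ j * (C * 2 ^ 10 * 2 ^ (-(1 - 20 / A) * j : ℝ)) := by
      have hpow : ((2 : ℝ) ^ (1 + 2 * j / A : ℝ)) ^ 10 =
          2 ^ j * (2 ^ 10 * 2 ^ (-(1 - 20 / A) * j : ℝ)) := by
        simp only [← Real.rpow_natCast, ← Real.rpow_mul zero_le_two, ← Real.rpow_add two_pos]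
        congr 1
        push_cast
        ring
      rw [hpow]
      ring

theorem exists_unmatchedProb_le_of_lt_one (hP : IsBernoulliHalfProduct P) (hd : 2 ≤ d) {β : ℝ}
    (hβ : β < 1) : ∃ A C, ∀ j, unmatchedProb P A j ≤ C * 2 ^ (-β * j : ℝ) := by
  obtain ⟨A, hA⟩ := exists_nat_gt (20 / (1 - β))
  have hβ' : 0 < 1 - β := sub_pos.2 hβ
  have hA0 : (0 : ℝ) < A := (div_pos (by norm_num) hβ').trans hA
  have hβA : β ≤ 1 - 20 / A := by
    rw [div_lt_comm₀ hβ' hA0] at hA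
    linarith
  obtain ⟨C, hC⟩ := exists_unmatchedProb_le hP hd (Nat.cast_pos.1 hA0)
  refine ⟨A, C, fun j => (hC j).trans ?_⟩
  have hC0 : 0 ≤ C := by
    have := measureReal_nonneg.trans (hC 0)
    simpa using this
  gcongr
  exact one_le_two

end Decay

section LimitMatching

open Filter Topology

variable {A : ℕ} {γ : Config d} {x : Site d}

open Classical in
/-- The limit of the partial matchings: every site that is matched at some stage keeps its partner
forever, and the remaining sites are fixed. -/
def limitMatching (A : ℕ) (γ : Config d) (x : Site d) : Site d :=
  if h : ∃ j, partialMatching A j γ x ≠ x then partialMatching A (Nat.find h) γ x else x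

theorem eventually_partialMatching_eq (A : ℕ) (γ : Config d) (x : Site d) :
    ∀ᶠ j in atTop, partialMatching A j γ x = limitMatching A γ x := by
  classical
  by_cases h : ∃ j, partialMatching A j γ x ≠ x
  · filter_upwards [eventually_ge_atTop (Nat.find h)] with j hj
    rw [limitMatching, dif_pos h, partialMatching_eq_of_le hj (Nat.find_spec h)]
  · rw [limitMatching, dif_neg h]
    exact .of_forall fun j => not_not.1 fun hj => h ⟨j, hj⟩

theorem partialMatching_eq_self_of_limitMatching_eq_self (h : limitMatching A γ x = x) (j : ℕ) :
    partialMatching A j γ x = x := by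
  by_contra hj
  obtain ⟨i, hi, hij⟩ :=
    ((eventually_partialMatching_eq A γ x).and (eventually_ge_atTop j)).exists
  rw [partialMatching_eq_of_le hij hj, h] at hi
  exact hj hi

theorem measurable_limitMatching (A : ℕ) (x : Site d) :
    Measurable fun γ : Config d => limitMatching A γ x :=
  measurable_of_tendsto_metrizable (fun j => measurable_partialMatching A j x) <|
    tendsto_pi_nhds.2 fun γ => tendsto_const_nhds.congr' <|
      (eventually_partialMatching_eq A γ x).mono fun _ => Eq.symm

theorem limitMatching_shiftCfg (A : ℕ) (γ : Config d) (z x : Site d) :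
    limitMatching A (shiftCfg z γ) (x + z) = limitMatching A γ x + z := by
  obtain ⟨j, hshift, hj⟩ := ((eventually_partialMatching_eq A (shiftCfg z γ) (x + z)).and
    (eventually_partialMatching_eq A γ x)).exists
  rw [← hshift, ← hj, partialMatching_shiftCfg]

theorem isMatching_limitMatching (h : ∀ x, limitMatching A γ x ≠ x) :
    IsMatching γ (limitMatching A γ) := by
  have hinv : (limitMatching A γ).Involutive := fun x => by
    obtain ⟨j, hj, hj'⟩ := ((eventually_partialMatching_eq A γ x).and
      (eventually_partialMatching_eq A γ (limitMatching A γ x))).exists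
    rw [← hj', ← hj, (isPartialMatching_partialMatching A j γ).involutive]
  refine ⟨hinv.bijective, hinv, fun x => ?_⟩
  obtain ⟨j, hj⟩ := (eventually_partialMatching_eq A γ x).exists
  have hne := h x
  rw [← hj] at hne ⊢
  exact (isPartialMatching_partialMatching A j γ).apply_of_ne x hne

theorem exists_stage_norm_limitMatching_le (h : limitMatching A γ 0 ≠ 0) :
    ∃ i, partialMatching A i γ 0 = 0 ∧ ‖limitMatching A γ 0‖ ≤ 2 ^ (i + 1) := by
  obtain ⟨j, hj⟩ := (eventually_partialMatching_eq A γ 0).exists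
  rw [← hj] at h ⊢
  obtain ⟨i, -, hi, hcell⟩ := exists_stage_of_matched h
  refine ⟨i, hi, (pi_norm_le_iff_of_nonneg (by positivity)).2 fun k => ?_⟩
  have hbox := mem_box.1 (hcell.sub_mem_box (Nat.two_pow_pos _)) k
  rw [sub_zero] at hbox
  rw [Int.norm_eq_abs]
  exact_mod_cast hbox

theorem one_le_norm_of_ne_zero {y : Site d} (hy : y ≠ 0) : 1 ≤ ‖y‖ := by
  obtain ⟨k, hk⟩ := Function.ne_iff.1 hy
  refine le_trans ?_ (norm_le_pi_norm y k)
  rw [Int.norm_eq_abs]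
  exact_mod_cast Int.one_le_abs hk

variable {P : Measure (Config d)}

theorem ae_limitMatching_ne (hP : IsBernoulliHalfProduct P)
    (hlim : Tendsto (unmatchedProb P A) atTop (𝓝 0)) :
    ∀ᵐ γ ∂P, ∀ x, limitMatching A γ x ≠ x := by
  have := hP.1
  refine ae_all_iff.2 fun x => ?_
  have horigin : P.real {γ | limitMatching A γ 0 = 0} = 0 :=
    le_antisymm (ge_of_tendsto' hlim fun j => measureReal_mono fun γ hγ =>
      partialMatching_eq_self_of_limitMatching_eq_self hγ j) measureReal_nonneg
  have hshift := measureReal_shiftCfg hP x (p := fun γ => limitMatching A γ x = x)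
    ((measurable_of_countable (· = x)).comp (measurable_limitMatching A x))
  have hiff (γ : Config d) : limitMatching A (shiftCfg x γ) x = x ↔ limitMatching A γ 0 = 0 := by
    simpa using congrArg (· = x) (limitMatching_shiftCfg A γ x 0)
  simp only [hiff, horigin] at hshift
  simpa only [ae_iff, not_not] using (measureReal_eq_zero_iff).1 hshift.symm

theorem ofReal_rpow_ZΦ_le_tsum {p : ℝ} (h : limitMatching A γ 0 ≠ 0) :
    ENNReal.ofReal (ZΦ (limitMatching A) γ ^ p) ≤
      ∑' i, {γ | partialMatching A i γ 0 = 0}.indicator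
        (fun _ => ENNReal.ofReal ((2 ^ max p 0) ^ (i + 1))) γ := by
  obtain ⟨i, hi, hle⟩ := exists_stage_norm_limitMatching_le h
  refine le_trans ?_ (ENNReal.le_tsum i)
  rw [Set.indicator_of_mem (show γ ∈ {γ | partialMatching A i γ 0 = 0} from hi)]
  apply ENNReal.ofReal_le_ofReal
  calc ZΦ (limitMatching A) γ ^ p ≤ ZΦ (limitMatching A) γ ^ max p 0 :=
        Real.rpow_le_rpow_of_exponent_le (one_le_norm_of_ne_zero h) (le_max_left p 0)
    _ ≤ (2 ^ (i + 1)) ^ max p 0 := Real.rpow_le_rpow (norm_nonneg _) hle (le_max_right p 0)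
    _ = _ := (Real.rpow_pow_comm zero_le_two _ _).symm

theorem lintegral_rpow_ZΦ_limitMatching_lt_top [IsFiniteMeasure P] {p : ℝ}
    (hne : ∀ᵐ γ ∂P, limitMatching A γ 0 ≠ 0)
    (hsum : Summable fun i => ((2 : ℝ) ^ max p 0) ^ (i + 1) * unmatchedProb P A i) :
    ∫⁻ γ, ENNReal.ofReal (ZΦ (limitMatching A) γ ^ p) ∂P < ⊤ := by
  have hmeas (i : ℕ) : MeasurableSet {γ : Config d | partialMatching A i γ 0 = 0} :=
    (measurable_partialMatching_eq A i 0 0).setOf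
  calc ∫⁻ γ, ENNReal.ofReal (ZΦ (limitMatching A) γ ^ p) ∂P
      ≤ ∫⁻ γ, ∑' i, {γ | partialMatching A i γ 0 = 0}.indicator
          (fun _ => ENNReal.ofReal ((2 ^ max p 0) ^ (i + 1))) γ ∂P :=
        lintegral_mono_ae (hne.mono fun _ => ofReal_rpow_ZΦ_le_tsum)
    _ = ∑' i, ENNReal.ofReal ((2 ^ max p 0) ^ (i + 1) * unmatchedProb P A i) := by
        rw [lintegral_tsum fun i => (measurable_const.indicator (hmeas i)).aemeasurable]
        refine tsum_congr fun i => ?_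
        rw [lintegral_indicator_const (hmeas i), ENNReal.ofReal_mul (by positivity), unmatchedProb,
          ofReal_measureReal]
    _ < ⊤ := hsum.tsum_ofReal_lt_top

theorem tendsto_unmatchedProb_zero {β C : ℝ} (hβ : 0 < β)
    (hC : ∀ j, unmatchedProb P A j ≤ C * 2 ^ (-β * j : ℝ)) :
    Tendsto (unmatchedProb P A) atTop (𝓝 0) := by
  have hgeom : Tendsto (fun j : ℕ => C * ((2 : ℝ) ^ (-β)) ^ j) atTop (𝓝 (C * 0)) :=
    (tendsto_pow_atTop_nhds_zero_of_lt_one (by positivity)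
      (Real.rpow_lt_one_of_one_lt_of_neg one_lt_two (neg_lt_zero.2 hβ))).const_mul C
  rw [mul_zero] at hgeom
  refine squeeze_zero (fun _ => measureReal_nonneg) (fun j => ?_) hgeom
  exact (hC j).trans_eq (by rw [Real.rpow_mul_natCast zero_le_two])

theorem summable_two_rpow_pow_mul_unmatchedProb {q β C : ℝ} (hq : q < β)
    (hC : ∀ j, unmatchedProb P A j ≤ C * 2 ^ (-β * j : ℝ)) :
    Summable fun i => ((2 : ℝ) ^ q) ^ (i + 1) * unmatchedProb P A i := by
  have hratio : (2 : ℝ) ^ (q - β) < 1 :=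
    Real.rpow_lt_one_of_one_lt_of_neg one_lt_two (sub_neg.2 hq)
  refine .of_nonneg_of_le (fun i => mul_nonneg (by positivity) measureReal_nonneg) (fun i => ?_)
    ((summable_geometric_of_lt_one (by positivity) hratio).mul_left (C * 2 ^ q))
  calc ((2 : ℝ) ^ q) ^ (i + 1) * unmatchedProb P A i
      ≤ (2 ^ q) ^ (i + 1) * (C * 2 ^ (-β * i : ℝ)) := by
        gcongr
        exact hC i
    _ = C * 2 ^ q * (2 ^ (q - β)) ^ i := by
        rw [Real.rpow_mul_natCast zero_le_two, sub_eq_add_neg, Real.rpow_add two_pos]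
        ring

end LimitMatching

end CoinMatching

open CoinMatching in
theorem statement1_general (d : ℕ) (hd : 2 ≤ d) (p : ℝ) (hp : p < 1)
    (P : Measure (Config d)) (hP : IsBernoulliHalfProduct P) :
    ∃ Φ : Config d → Site d → Site d,
      IsMatchingRule P Φ ∧ IsEquivariant P Φ ∧ ∫⁻ γ, ENNReal.ofReal (ZΦ Φ γ ^ p) ∂P < ⊤ := by
  have := hP.1
  obtain ⟨β, hpβ, hβ⟩ := exists_between (max_lt hp zero_lt_one)
  obtain ⟨A, C, hC⟩ := exists_unmatchedProb_le_of_lt_one hP hd hβ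
  have hmatched := ae_limitMatching_ne hP
    (tendsto_unmatchedProb_zero ((le_max_right p 0).trans_lt hpβ) hC)
  exact ⟨limitMatching A,
    ⟨measurable_limitMatching A, hmatched.mono fun _ => isMatching_limitMatching⟩,
    fun z x => .of_forall fun γ => limitMatching_shiftCfg A γ z x,
    lintegral_rpow_ZΦ_limitMatching_lt_top (hmatched.mono fun _ h => h 0)
      (summable_two_rpow_pow_mul_unmatchedProb hpβ hC)⟩

/-- For every `d ≥ 2` and `ε > 0` there exists a translation-equivariant matching rule `Φ`
with `E[Z_Φ^{2/3 - ε}] < ∞`. -/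
theorem statement1 (d : ℕ) (hd : 2 ≤ d) (ε : ℝ) (hε : 0 < ε)
    (P : Measure (Config d)) (hP : IsBernoulliHalfProduct P) :
    ∃ Φ : Config d → Site d → Site d,
      IsMatchingRule P Φ ∧ IsEquivariant P Φ ∧
        ∫⁻ γ, ENNReal.ofReal (ZΦ Φ γ ^ (2 / 3 - ε)) ∂P < ⊤ :=
  statement1_general d hd (2 / 3 - ε) (by linarith) P hP

end
end

section
/- For every integer d ≥ 1 there exist a constant c = c(d) < ∞ and a translation-equivariant matching rule Φ such that for all r > 0, ℙ(Z_Φ > r) ≤ c r^{−1/2}. -/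
open MeasureTheory ENNReal

noncomputable section

/-! Read ones as opening and zeros as closing brackets along each line parallel to `e₁`, and match
every bracket with its partner. The partner of a site is at distance `n` exactly when the `±1` walk
read off along the line (to the right from a one, to the left from a zero) first returns to `0`
after `n + 1` steps. So the tail of the matching distance is the tail of the return time of the
simple random walk, and `ℙ(S₁ ≠ 0, …, S₂ₘ ≠ 0) = (2m choose m) / 4 ^ m ≤ (2m + 1) ^ (-1/2)`. -/

section Counting

/-- The reflection-principle expression for the number of `N`-step nearest-neighbour walks on `ℤ`
that start at height `k` and stay positive: the number of unrestricted walks from `0` ending at one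
of the `2 * k` heights in `(-k, k]`, half of which have the wrong parity. Symmetry of the binomial
coefficients has been used to keep the lower index free of subtraction. -/
def ballotSum (N k : ℕ) : ℕ := ∑ j ∈ Finset.range k, N.choose ((N + j + 1) / 2)

lemma ballotSum_succ_right (N k : ℕ) :
    ballotSum N (k + 1) = ballotSum N k + N.choose ((N + k + 1) / 2) :=
  Finset.sum_range_succ _ _

@[simp] lemma ballotSum_zero_right (N : ℕ) : ballotSum N 0 = 0 := rfl

lemma ballotSum_one_right (N : ℕ) : ballotSum N 1 = N.choose ((N + 1) / 2) := by
  simp [ballotSum]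

lemma ballotSum_zero_succ (k : ℕ) : ballotSum 0 (k + 1) = 1 := by
  induction k with
  | zero => simp [ballotSum]
  | succ k ih => rw [ballotSum_succ_right, ih, Nat.choose_eq_zero_of_lt (by omega)]

lemma choose_succ_half (N : ℕ) : N.choose ((N + 1) / 2) = N.choose (N / 2) :=
  Nat.choose_symm_of_eq_add (by omega)

lemma ballotSum_succ_succ (N k : ℕ) :
    ballotSum (N + 1) (k + 1) = ballotSum N k + ballotSum N (k + 2) := by
  induction k with
  | zero =>
    have half_add_one : (N + 1 + 1) / 2 = N / 2 + 1 := by omega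
    simp only [zero_add, ballotSum_zero_right, ballotSum_one_right, ballotSum_succ_right N 1]
    rw [choose_succ_half N, half_add_one, Nat.choose_succ_succ]
  | succ k ih =>
    have pascal : (N + 1).choose ((N + 1 + (k + 1) + 1) / 2) =
        N.choose ((N + k + 1) / 2) + N.choose ((N + (k + 2) + 1) / 2) := by
      rw [show (N + 1 + (k + 1) + 1) / 2 = (N + k + 1) / 2 + 1 by omega,
        show (N + (k + 2) + 1) / 2 = (N + k + 1) / 2 + 1 by omega, Nat.choose_succ_succ]
    rw [ballotSum_succ_right (N + 1), ih, pascal, ballotSum_succ_right N k,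
      ballotSum_succ_right N (k + 2)]
    ring

lemma ballotSum_succ_natAbs (N : ℕ) {k : ℤ} (hk : k ≠ 0) :
    ballotSum (N + 1) k.natAbs = ballotSum N (k + 1).natAbs + ballotSum N (k - 1).natAbs := by
  obtain ⟨j, rfl | rfl⟩ : ∃ j : ℕ, k = j + 1 ∨ k = -(j + 1) := ⟨k.natAbs - 1, by omega⟩
  · rw [show ((j : ℤ) + 1).natAbs = j + 1 by omega, show ((j : ℤ) + 1 + 1).natAbs = j + 2 by omega,
      show ((j : ℤ) + 1 - 1).natAbs = j by omega, ballotSum_succ_succ, add_comm]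
  · rw [show (-((j : ℤ) + 1)).natAbs = j + 1 by omega,
      show (-((j : ℤ) + 1) + 1).natAbs = j by omega,
      show (-((j : ℤ) + 1) - 1).natAbs = j + 2 by omega, ballotSum_succ_succ]

/-- The `±1` step encoded by a letter, so that `pm1 γ y = spin (γ y)` definitionally. -/
def spin (b : Bool) : ℤ := if b then 1 else -1

/-- Words of length `N` whose `±1` walk, started at height `k`, does not visit `0` at any of the
times `1, …, N`. The starting height itself may be `0`. -/
def zeroAvoidingWords (N : ℕ) (k : ℤ) : Finset (Fin N → Bool) :=
  {w | ∀ n, ∀ hn : n < N, k + ∑ i : Fin (n + 1), spin (w (i.castLE hn)) ≠ 0}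

lemma cons_mem_zeroAvoidingWords {N : ℕ} {k : ℤ} {b : Bool} {w : Fin N → Bool} :
    (Fin.cons b w : Fin (N + 1) → Bool) ∈ zeroAvoidingWords (N + 1) k ↔
      k + spin b ≠ 0 ∧ w ∈ zeroAvoidingWords N (k + spin b) := by
  have walk_cons (n : ℕ) (hn : n < N + 1) :
      k + ∑ i : Fin (n + 1), spin ((Fin.cons b w : Fin (N + 1) → Bool) (i.castLE hn)) =
        k + spin b + ∑ i : Fin n, spin (w (i.castLE (Nat.le_of_lt_succ hn))) := by
    rw [Fin.sum_univ_succ, add_assoc]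
    rfl
  simp only [zeroAvoidingWords, Finset.mem_filter_univ, walk_cons]
  constructor
  · exact fun h => ⟨by simpa using h 0 N.succ_pos, fun n hn => h (n + 1) (Nat.succ_lt_succ hn)⟩
  · rintro ⟨h_start, h_later⟩ (_ | n) hn
    · simpa using h_start
    · exact h_later n (Nat.lt_of_succ_lt_succ hn)

lemma card_zeroAvoidingWords_succ (N : ℕ) (k : ℤ) :
    (zeroAvoidingWords (N + 1) k).card =
      (if k + 1 ≠ 0 then (zeroAvoidingWords N (k + 1)).card else 0) +
        if k - 1 ≠ 0 then (zeroAvoidingWords N (k - 1)).card else 0 := by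
  have card_eq_sum (M : ℕ) (j : ℤ) : (zeroAvoidingWords M j).card =
      ∑ w, if w ∈ zeroAvoidingWords M j then 1 else 0 := by
    simp
  have sum_cons (f : (Fin (N + 1) → Bool) → ℕ) :
      ∑ w, f w = ∑ w, f (Fin.cons true w) + ∑ w, f (Fin.cons false w) := by
    rw [← (Fin.consEquiv fun _ => Bool).sum_comp, Fintype.sum_prod_type, Fintype.sum_bool]
    rfl
  rw [card_eq_sum, sum_cons]
  simp only [cons_mem_zeroAvoidingWords, card_eq_sum, spin]
  congr 1 <;> split_ifs <;> simp_all [sub_eq_add_neg]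

lemma card_zeroAvoidingWords (N : ℕ) {k : ℤ} (hk : k ≠ 0) :
    (zeroAvoidingWords N k).card = ballotSum N k.natAbs := by
  induction N generalizing k with
  | zero =>
    obtain ⟨j, hj⟩ := Nat.exists_eq_succ_of_ne_zero (Int.natAbs_ne_zero.mpr hk)
    simp [zeroAvoidingWords, hj, ballotSum_zero_succ]
  | succ N ih =>
    have card_or_zero (j : ℤ) : (if j ≠ 0 then (zeroAvoidingWords N j).card else 0) =
        ballotSum N j.natAbs := by
      split_ifs with hj
      · exact ih hj
      · simp_all
    rw [card_zeroAvoidingWords_succ, card_or_zero, card_or_zero, ballotSum_succ_natAbs N hk]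

lemma card_zeroAvoidingWords_two_mul (m : ℕ) :
    (zeroAvoidingWords (2 * m) 0).card = m.centralBinom := by
  cases m with
  | zero => simp [zeroAvoidingWords]
  | succ m =>
    rw [show 2 * (m + 1) = 2 * m + 1 + 1 by ring, card_zeroAvoidingWords_succ]
    simp only [zero_add, zero_sub, ne_eq, one_ne_zero, neg_eq_zero, not_false_eq_true, if_true,
      card_zeroAvoidingWords, Int.natAbs_neg, Int.natAbs_one, ballotSum_one_right]
    rw [Nat.centralBinom_eq_two_mul_choose, show 2 * (m + 1) = 2 * m + 1 + 1 by ring,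
      Nat.choose_succ_succ, show (2 * m + 1 + 1) / 2 = m + 1 by omega, Nat.choose_symm_half]

lemma centralBinom_sq_mul_le (m : ℕ) : m.centralBinom ^ 2 * (2 * m + 1) ≤ 16 ^ m := by
  induction m with
  | zero => simp
  | succ m ih =>
    refine Nat.le_of_mul_le_mul_left ?_ (pow_pos m.succ_pos 2)
    calc (m + 1) ^ 2 * ((m + 1).centralBinom ^ 2 * (2 * (m + 1) + 1))
        = ((m + 1) * (m + 1).centralBinom) ^ 2 * (2 * m + 3) := by ring
      _ = m.centralBinom ^ 2 * (2 * m + 1) * (4 * ((2 * m + 1) * (2 * m + 3))) := by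
        rw [Nat.succ_mul_centralBinom_succ]; ring
      _ ≤ 16 ^ m * (4 * (4 * (m + 1) ^ 2)) := Nat.mul_le_mul ih (by nlinarith)
      _ = (m + 1) ^ 2 * 16 ^ (m + 1) := by ring

lemma centralBinom_div_four_pow_le (m : ℕ) :
    (m.centralBinom : ℝ) / 4 ^ m ≤ 1 / √(2 * m + 1) := by
  rw [div_le_div_iff₀ (by positivity) (by positivity), one_mul]
  refine le_of_sq_le_sq ?_ (by positivity)
  calc ((m.centralBinom : ℝ) * √(2 * m + 1)) ^ 2
      = (m.centralBinom : ℝ) ^ 2 * (2 * m + 1) := by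
        rw [mul_pow, Real.sq_sqrt (by positivity)]
    _ ≤ 16 ^ m := mod_cast centralBinom_sq_mul_le m
    _ = (4 ^ m) ^ 2 := by rw [← pow_mul, mul_comm, pow_mul]; norm_num

end Counting

section Segments

variable {d : ℕ}

lemma pm1_eq_one_or_eq_neg_one (γ : Config d) (x : Site d) : pm1 γ x = 1 ∨ pm1 γ x = -1 := by
  unfold pm1
  split_ifs <;> simp

lemma pm1_ne_zero (γ : Config d) (x : Site d) : pm1 γ x ≠ 0 := by
  rcases pm1_eq_one_or_eq_neg_one γ x with h | h <;> simp [h]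

lemma eq_not_of_pm1_eq_neg {γ : Config d} {x y : Site d} (h : pm1 γ y = -pm1 γ x) :
    γ y = !γ x := by
  cases hx : γ x <;> cases hy : γ y <;> simp [pm1, hx, hy] at h ⊢

/-- The number of ones minus the number of zeros among the `n + 1` sites `x, x + v, …, x + n • v`,
that is, the height of the walk along `v` after `n + 1` steps. -/
def segmentSum (v : Site d) (γ : Config d) (x : Site d) (n : ℕ) : ℤ :=
  ∑ i ∈ Finset.range (n + 1), pm1 γ (x + (i : ℤ) • v)

@[simp] lemma segmentSum_zero (v : Site d) (γ : Config d) (x : Site d) :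
    segmentSum v γ x 0 = pm1 γ x := by
  simp [segmentSum]

lemma segmentSum_succ (v : Site d) (γ : Config d) (x : Site d) (n : ℕ) :
    segmentSum v γ x (n + 1) = segmentSum v γ x n + pm1 γ (x + ((n + 1 : ℕ) : ℤ) • v) :=
  Finset.sum_range_succ _ _

lemma segmentSum_add_add_one (v : Site d) (γ : Config d) (x : Site d) (m n : ℕ) :
    segmentSum v γ x (m + n + 1) =
      segmentSum v γ x m + segmentSum v γ (x + ((m + 1 : ℕ) : ℤ) • v) n := by
  rw [segmentSum, show m + n + 1 + 1 = (m + 1) + (n + 1) by ring, Finset.sum_range_add]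
  simp only [segmentSum, Nat.cast_add, add_smul, add_assoc]

lemma segmentSum_neg (v : Site d) (γ : Config d) (x : Site d) (n : ℕ) :
    segmentSum (-v) γ (x + (n : ℤ) • v) n = segmentSum v γ x n := by
  unfold segmentSum
  rw [← Finset.sum_range_reflect]
  refine Finset.sum_congr rfl fun i hi => congrArg (pm1 γ) ?_
  have hin : i ≤ n := Nat.lt_succ_iff.mp (Finset.mem_range.mp hi)
  rw [Nat.add_sub_cancel, Nat.cast_sub hin, smul_neg, sub_smul]
  abel

lemma segmentSum_shiftCfg (z v : Site d) (γ : Config d) (x : Site d) (n : ℕ) :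
    segmentSum v (shiftCfg z γ) (x + z) n = segmentSum v γ x n := by
  simp only [segmentSum, pm1, shiftCfg, add_right_comm x z, add_sub_cancel_right]

lemma pm1_mul_segmentSum_pos {v : Site d} {γ : Config d} {x : Site d} {n : ℕ}
    (h : ∀ m ≤ n, segmentSum v γ x m ≠ 0) : 0 < pm1 γ x * segmentSum v γ x n := by
  induction n with
  | zero => simpa using mul_self_pos.mpr (pm1_ne_zero γ x)
  | succ n ih =>
    have h_prev := ih fun m hm => h m (hm.trans n.le_succ)
    have h_ne := h (n + 1) le_rfl
    rw [segmentSum_succ] at h_ne ⊢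
    rcases pm1_eq_one_or_eq_neg_one γ x with hx | hx <;>
      rcases pm1_eq_one_or_eq_neg_one γ (x + ((n + 1 : ℕ) : ℤ) • v) with hy | hy <;>
      rw [hx] at h_prev ⊢ <;> rw [hy] at h_ne ⊢ <;> omega

end Segments

section Matching

variable {d : ℕ}

/-- The distance, in multiples of `v`, from `x` to its partner in `bracketMatching v γ`. It is `0`
if the walk read off from `x` never returns to `0`. -/
def bracketDist (v : Site d) (γ : Config d) (x : Site d) : ℕ :=
  sInf {n | segmentSum (pm1 γ x • v) γ x n = 0}

/-- Bracket matching along `v`: reading ones as opening and zeros as closing brackets along each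
line `x + ℤ v`, every bracket is sent to its partner. A bracket without partner is left fixed. -/
def bracketMatching (v : Site d) (γ : Config d) (x : Site d) : Site d :=
  x + (bracketDist v γ x : ℤ) • pm1 γ x • v

lemma segmentSum_ne_zero_of_lt_bracketDist {v : Site d} {γ : Config d} {x : Site d} {n : ℕ}
    (h : n < bracketDist v γ x) : segmentSum (pm1 γ x • v) γ x n ≠ 0 :=
  Nat.notMem_of_lt_sInf h

lemma segmentSum_bracketDist {v : Site d} {γ : Config d} {x : Site d}
    (h : ∃ n, segmentSum (pm1 γ x • v) γ x n = 0) :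
    segmentSum (pm1 γ x • v) γ x (bracketDist v γ x) = 0 :=
  Nat.sInf_mem h

lemma bracketDist_eq {v : Site d} {γ : Config d} {x : Site d} {n : ℕ}
    (h_zero : segmentSum (pm1 γ x • v) γ x n = 0)
    (h_ne : ∀ m < n, segmentSum (pm1 γ x • v) γ x m ≠ 0) : bracketDist v γ x = n :=
  IsLeast.csInf_eq ⟨h_zero, fun _ hm => not_lt.mp fun hlt => h_ne _ hlt hm⟩

lemma pm1_bracketMatching {v : Site d} {γ : Config d} {x : Site d}
    (h : ∃ n, segmentSum (pm1 γ x • v) γ x n = 0) :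
    pm1 γ (bracketMatching v γ x) = -pm1 γ x := by
  have h_return := segmentSum_bracketDist h
  cases hn : bracketDist v γ x with
  | zero => simp [hn, pm1_ne_zero] at h_return
  | succ n =>
    have h_pos : 0 < pm1 γ x * segmentSum (pm1 γ x • v) γ x n :=
      pm1_mul_segmentSum_pos fun m hm => segmentSum_ne_zero_of_lt_bracketDist (by omega)
    rw [hn, segmentSum_succ] at h_return
    rw [bracketMatching, hn]
    rcases pm1_eq_one_or_eq_neg_one γ x with hx | hx <;>
      rcases pm1_eq_one_or_eq_neg_one γ (x + ((n + 1 : ℕ) : ℤ) • pm1 γ x • v) with hy | hy <;>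
      rw [hy] at h_return ⊢ <;> rw [hx] at h_pos h_return ⊢ <;> omega

lemma bracketDist_bracketMatching {v : Site d} {γ : Config d} {x : Site d}
    (h : ∃ n, segmentSum (pm1 γ x • v) γ x n = 0) :
    bracketDist v γ (bracketMatching v γ x) = bracketDist v γ x := by
  have h_return := segmentSum_bracketDist h
  apply bracketDist_eq
  · rwa [pm1_bracketMatching h, neg_smul, bracketMatching, segmentSum_neg]
  · intro m hm
    obtain ⟨j, hj⟩ : ∃ j, bracketDist v γ x = j + m + 1 :=
      Nat.exists_eq_add_of_lt hm |>.imp fun j hj => by omega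
    have h_split := segmentSum_add_add_one (pm1 γ x • v) γ x j m
    rw [← hj, h_return, ← segmentSum_neg _ _ (x + _) m] at h_split
    have h_end : x + ((j + 1 : ℕ) : ℤ) • pm1 γ x • v + (m : ℤ) • pm1 γ x • v =
        bracketMatching v γ x := by
      rw [bracketMatching, hj, add_assoc, ← add_smul]
      congr 2
      push_cast
      ring
    rw [pm1_bracketMatching h, neg_smul, ← h_end]
    have h_initial := segmentSum_ne_zero_of_lt_bracketDist (show j < bracketDist v γ x by omega)
    omega

lemma bracketMatching_bracketMatching {v : Site d} {γ : Config d} {x : Site d}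
    (h : ∃ n, segmentSum (pm1 γ x • v) γ x n = 0) :
    bracketMatching v γ (bracketMatching v γ x) = x := by
  rw [bracketMatching, pm1_bracketMatching h, bracketDist_bracketMatching h, bracketMatching,
    neg_smul, smul_neg, add_neg_cancel_right]

lemma isMatching_bracketMatching {v : Site d} {γ : Config d}
    (h : ∀ x, ∃ n, segmentSum (pm1 γ x • v) γ x n = 0) : IsMatching γ (bracketMatching v γ) :=
  have involutive : Function.Involutive (bracketMatching v γ) :=
    fun x => bracketMatching_bracketMatching (h x)
  ⟨involutive.bijective, involutive, fun x => eq_not_of_pm1_eq_neg (pm1_bracketMatching (h x))⟩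

lemma bracketMatching_shiftCfg (v z : Site d) (γ : Config d) (x : Site d) :
    bracketMatching v (shiftCfg z γ) (x + z) = bracketMatching v γ x + z := by
  have pm1_shift : pm1 (shiftCfg z γ) (x + z) = pm1 γ x := by simp [pm1, shiftCfg]
  simp only [bracketMatching, bracketDist, pm1_shift, segmentSum_shiftCfg, add_right_comm]

lemma norm_bracketMatching_sub_le (v : Site d) (γ : Config d) (x : Site d) :
    ‖bracketMatching v γ x - x‖ ≤ bracketDist v γ x * ‖v‖ := by
  have norm_direction : ‖pm1 γ x • v‖ = ‖v‖ := by
    rcases pm1_eq_one_or_eq_neg_one γ x with h | h <;> simp [h]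
  rw [bracketMatching, add_sub_cancel_left, ← norm_direction]
  simpa using norm_zsmul_le (bracketDist v γ x : ℤ) (pm1 γ x • v)

end Matching

section Measurability

variable {d : ℕ}

lemma measurable_nat_sInf {α : Type*} [MeasurableSpace α] {S : α → Set ℕ}
    (hS : ∀ n, MeasurableSet {a | n ∈ S a}) : Measurable fun a => sInf (S a) := by
  refine measurable_of_Ioi fun n => ?_
  have preimage_Ioi_eq : (fun a => sInf (S a)) ⁻¹' Set.Ioi n =
      (⋃ m, {a | m ∈ S a}) ∩ ⋂ m ≤ n, {a | m ∈ S a}ᶜ := by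
    ext a
    simp only [Set.mem_preimage, Set.mem_Ioi, Set.mem_inter_iff, Set.mem_iUnion, Set.mem_iInter,
      Set.mem_compl_iff, Set.mem_ofPred_eq]
    constructor
    · exact fun h => ⟨Nat.nonempty_of_pos_sInf (Nat.zero_lt_of_lt h),
        fun m hm => Nat.notMem_of_lt_sInf (hm.trans_lt h)⟩
    · exact fun ⟨h_nonempty, h⟩ => not_le.mp fun hle => h _ hle (Nat.sInf_mem h_nonempty)
  rw [preimage_Ioi_eq]
  exact (MeasurableSet.iUnion hS).inter
    (MeasurableSet.iInter fun m => MeasurableSet.iInter fun _ => (hS m).compl)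

lemma measurable_pm1 (x : Site d) : Measurable fun γ : Config d => pm1 γ x :=
  (Measurable.of_discrete (f := spin)).comp (measurable_pi_apply x)

lemma measurable_segmentSum (v x : Site d) (n : ℕ) :
    Measurable fun γ : Config d => segmentSum v γ x n :=
  Finset.measurable_sum _ fun _ _ => measurable_pm1 _

lemma measurable_bracketDist (v x : Site d) : Measurable fun γ : Config d => bracketDist v γ x := by
  refine measurable_nat_sInf fun n => ?_
  have measurable_joint :
      Measurable fun p : ℤ × Config d => segmentSum (p.1 • v) p.2 x n :=
    measurable_from_prod_countable_right fun a => measurable_segmentSum (a • v) x n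
  exact measurable_joint.comp ((measurable_pm1 x).prodMk measurable_id)
    (measurableSet_singleton 0)

lemma measurable_bracketMatching (v x : Site d) :
    Measurable fun γ : Config d => bracketMatching v γ x :=
  (Measurable.of_discrete (f := fun p : ℕ × ℤ => x + (p.1 : ℤ) • p.2 • v)).comp
    ((measurable_bracketDist v x).prodMk (measurable_pm1 x))

end Measurability

namespace IsBernoulliHalfProduct

variable {d : ℕ} {P : Measure (Config d)}

lemma measureReal_comp_eq (hP : IsBernoulliHalfProduct P) {ι : Type*} [Fintype ι]
    {u : ι → Site d} (hu : Function.Injective u) (w : ι → Bool) :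
    P.real {γ | γ ∘ u = w} = (1 / 2) ^ Fintype.card ι := by
  have cylinder : {γ : Config d | γ ∘ u = w} =
      {γ | ∀ x ∈ Finset.univ.map ⟨u, hu⟩, γ x = Function.extend u w (fun _ => false) x} := by
    ext γ
    simp only [Set.mem_ofPred_eq, Finset.forall_mem_map, Function.Embedding.coeFn_mk,
      hu.extend_apply, Finset.mem_univ, true_implies, funext_iff, Function.comp_apply]
  rw [cylinder, measureReal_def, hP.2, Finset.card_map, Finset.card_univ]
  simp

lemma measureReal_comp_mem (hP : IsBernoulliHalfProduct P) {ι : Type*} [Fintype ι]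
    {u : ι → Site d} (hu : Function.Injective u) (A : Finset (ι → Bool)) :
    P.real {γ | γ ∘ u ∈ A} = A.card / 2 ^ Fintype.card ι := by
  have := hP.1
  have measurable_comp : Measurable fun γ : Config d => γ ∘ u :=
    measurable_pi_lambda _ fun i => measurable_pi_apply (u i)
  calc P.real {γ | γ ∘ u ∈ A}
      = ∑ w ∈ A, P.real {γ | γ ∘ u = w} :=
        (sum_measureReal_preimage_singleton A fun w _ =>
          measurable_comp (measurableSet_singleton w)).symm
    _ = A.card / 2 ^ Fintype.card ι := by
        simp only [hP.measureReal_comp_eq hu, Finset.sum_const, nsmul_eq_mul,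
          div_eq_mul_inv, one_mul, inv_pow]

lemma measureReal_segmentSum_ne_zero (hP : IsBernoulliHalfProduct P) {v : Site d} (hv : v ≠ 0)
    (x : Site d) (m : ℕ) :
    P.real {γ | ∀ n < 2 * m, segmentSum v γ x n ≠ 0} = m.centralBinom / 4 ^ m := by
  let u (i : Fin (2 * m)) : Site d := x + ((i : ℕ) : ℤ) • v
  have u_injective : Function.Injective u := fun i j hij =>
    Fin.ext <| Nat.cast_injective (smul_left_injective ℤ hv (add_left_cancel hij))
  have event_eq : {γ : Config d | ∀ n < 2 * m, segmentSum v γ x n ≠ 0} =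
      {γ | γ ∘ u ∈ zeroAvoidingWords (2 * m) 0} := by
    ext γ
    simp only [Set.mem_ofPred_eq, zeroAvoidingWords, Finset.mem_filter_univ, zero_add]
    refine forall₂_congr fun n _ => not_congr <| Eq.congr_left ?_
    exact Finset.sum_range fun i => pm1 γ (x + (i : ℤ) • v)
  rw [event_eq, hP.measureReal_comp_mem u_injective, card_zeroAvoidingWords_two_mul,
    Fintype.card_fin, pow_mul]
  norm_num

lemma measureReal_segmentSum_ne_zero_le (hP : IsBernoulliHalfProduct P) {v : Site d} (hv : v ≠ 0)
    (x : Site d) (m : ℕ) :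
    P.real {γ | ∀ n < 2 * m, segmentSum v γ x n ≠ 0} ≤ 1 / √(2 * m + 1) :=
  (hP.measureReal_segmentSum_ne_zero hv x m).trans_le (centralBinom_div_four_pow_le m)

lemma ae_exists_segmentSum_eq_zero (hP : IsBernoulliHalfProduct P) {v : Site d} (hv : v ≠ 0) :
    ∀ᵐ γ ∂P, ∀ x, ∃ n, segmentSum v γ x n = 0 := by
  have := hP.1
  refine ae_all_iff.mpr fun x => ae_iff.mpr ?_
  have h_le (m : ℕ) : P.real {γ | ¬∃ n, segmentSum v γ x n = 0} ≤ 1 / √(2 * m + 1) := by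
    refine (measureReal_mono ?_).trans (hP.measureReal_segmentSum_ne_zero_le hv x m)
    exact fun γ h_none n _ hn => h_none ⟨n, hn⟩
  have h_lim : Filter.Tendsto (fun m : ℕ => 1 / √(2 * m + 1)) Filter.atTop (nhds 0) :=
    tendsto_const_nhds.div_atTop <| Real.tendsto_sqrt_atTop.comp <|
      Filter.tendsto_atTop_add_const_right _ _ <|
        tendsto_natCast_atTop_atTop.const_mul_atTop two_pos
  exact (measureReal_eq_zero_iff).mp
    (le_antisymm (ge_of_tendsto' h_lim h_le) measureReal_nonneg)

lemma ae_isMatching_bracketMatching (hP : IsBernoulliHalfProduct P) {v : Site d} (hv : v ≠ 0) :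
    ∀ᵐ γ ∂P, IsMatching γ (bracketMatching v γ) := by
  filter_upwards [hP.ae_exists_segmentSum_eq_zero hv,
    hP.ae_exists_segmentSum_eq_zero (neg_ne_zero.mpr hv)] with γ h_forward h_backward
  refine isMatching_bracketMatching fun x => ?_
  rcases pm1_eq_one_or_eq_neg_one γ x with hx | hx
  · simpa [hx] using h_forward x
  · simpa [hx] using h_backward x

lemma measureReal_two_mul_le_bracketDist (hP : IsBernoulliHalfProduct P) {v : Site d} (hv : v ≠ 0)
    (x : Site d) (m : ℕ) :
    P.real {γ | 2 * m ≤ bracketDist v γ x} ≤ 2 / √(2 * m + 1) := by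
  have := hP.1
  have subset_union : {γ | 2 * m ≤ bracketDist v γ x} ⊆
      {γ | ∀ n < 2 * m, segmentSum v γ x n ≠ 0} ∪
        {γ | ∀ n < 2 * m, segmentSum (-v) γ x n ≠ 0} := by
    intro γ hγ
    have h_ne (n : ℕ) (hn : n < 2 * m) : segmentSum (pm1 γ x • v) γ x n ≠ 0 :=
      segmentSum_ne_zero_of_lt_bracketDist (hn.trans_le hγ)
    rcases pm1_eq_one_or_eq_neg_one γ x with hx | hx
    · exact Or.inl (by simpa [hx] using h_ne)
    · exact Or.inr (by simpa [hx] using h_ne)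
  calc P.real {γ | 2 * m ≤ bracketDist v γ x}
      ≤ 1 / √(2 * m + 1) + 1 / √(2 * m + 1) :=
        (measureReal_mono subset_union).trans <| (measureReal_union_le _ _).trans <|
          add_le_add (hP.measureReal_segmentSum_ne_zero_le hv x m)
            (hP.measureReal_segmentSum_ne_zero_le (neg_ne_zero.mpr hv) x m)
    _ = 2 / √(2 * m + 1) := by ring

lemma measureReal_lt_bracketDist (hP : IsBernoulliHalfProduct P) {v : Site d} (hv : v ≠ 0)
    (x : Site d) {r : ℝ} (hr : 0 < r) :
    P.real {γ | r < bracketDist v γ x} ≤ 4 * r ^ (-(1 / 2) : ℝ) := by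
  have := hP.1
  have floor_le : (⌊r / 2⌋₊ : ℝ) ≤ r / 2 := Nat.floor_le (by positivity)
  have lt_floor : r / 2 < ⌊r / 2⌋₊ + 1 := Nat.lt_floor_add_one _
  calc P.real {γ | r < bracketDist v γ x}
      ≤ P.real {γ | 2 * ⌊r / 2⌋₊ ≤ bracketDist v γ x} := by
        refine measureReal_mono fun γ (hγ : r < bracketDist v γ x) => ?_
        have : (2 * ⌊r / 2⌋₊ : ℝ) ≤ bracketDist v γ x := by linarith
        exact mod_cast this
    _ ≤ 2 / √(2 * ⌊r / 2⌋₊ + 1) := hP.measureReal_two_mul_le_bracketDist hv x _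
    _ ≤ 2 / √(r / 2 ^ 2) := by gcongr; linarith
    _ = 4 * r ^ (-(1 / 2) : ℝ) := by
        rw [Real.sqrt_div hr.le, Real.sqrt_sq two_pos.le, Real.rpow_neg hr.le,
          ← Real.sqrt_eq_rpow]
        field_simp
        norm_num

end IsBernoulliHalfProduct

lemma norm_e1 {d : ℕ} (hd : 1 ≤ d) : ‖e1 d‖ = 1 := by
  refine le_antisymm ((pi_norm_le_iff_of_nonneg zero_le_one).mpr fun i => ?_) ?_
  · unfold e1
    split_ifs <;> simp
  · simpa [e1] using norm_le_pi_norm (e1 d) ⟨0, hd⟩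

/-- For every `d ≥ 1` there exist `c = c(d) < ∞` and a translation-equivariant matching
rule `Φ` such that `ℙ(Z_Φ > r) ≤ c r^{-1/2}` for all `r > 0`. -/
theorem statement2 (d : ℕ) (hd : 1 ≤ d)
    (P : Measure (Config d)) (hP : IsBernoulliHalfProduct P) :
    ∃ (c : ℝ) (Φ : Config d → Site d → Site d),
      IsMatchingRule P Φ ∧ IsEquivariant P Φ ∧
        ∀ r : ℝ, 0 < r →
          P {γ | r < ZΦ Φ γ} ≤ ENNReal.ofReal (c * r ^ (-(1 / 2) : ℝ)) := by
  have := hP.1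
  have e1_ne_zero : e1 d ≠ 0 := norm_ne_zero_iff.mp (norm_e1 hd ▸ one_ne_zero)
  refine ⟨4, bracketMatching (e1 d),
    ⟨measurable_bracketMatching (e1 d), hP.ae_isMatching_bracketMatching e1_ne_zero⟩,
    fun z x => .of_forall fun γ => bracketMatching_shiftCfg (e1 d) z γ x, fun r hr => ?_⟩
  have ZΦ_le (γ : Config d) : ZΦ (bracketMatching (e1 d)) γ ≤ bracketDist (e1 d) γ 0 := by
    simpa [ZΦ, norm_e1 hd] using norm_bracketMatching_sub_le (e1 d) γ 0
  calc P {γ | r < ZΦ (bracketMatching (e1 d)) γ}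
      ≤ P {γ | r < bracketDist (e1 d) γ 0} :=
        measure_mono fun γ (hγ : r < ZΦ _ γ) => hγ.trans_le (ZΦ_le γ)
    _ = ENNReal.ofReal (P.real {γ | r < bracketDist (e1 d) γ 0}) := (ofReal_measureReal).symm
    _ ≤ ENNReal.ofReal (4 * r ^ (-(1 / 2) : ℝ)) :=
        ENNReal.ofReal_le_ofReal (hP.measureReal_lt_bracketDist e1_ne_zero 0 hr)

end
end
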